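/- Let f(t,x;τ,ξ) be a polynomial of degree 2 in (τ,ξ) ∈ ℝ×ℝⁿ whose coefficients are real-analytic functions of (t,x) on an open set U ⊂ ℝ×ℝⁿ, with homogeneous decomposition f = f₂+f₁+f₀. Let ψ be real-analytic with Σ = {(t,x)∈U : t=ψ(x)} ⊂ U, and assume there is a nonzero constant a such that 0 ≠ 1 − |∇ψ(x)|² = a·f₂(ψ(x),x;−1,∇ψ(x)) for all x with (ψ(x),x) ∈ U. Then for any real-analytic function v₀ on Σ there exists a real-analytic function v(t,x) on an open neighborhood Ω of Σ such that u(t,x) = −a·log(t−ψ(x)) + v(t,x) solves u_tt − Δu = f(t,x;∂_t u, ∇u) on Ω ∩ {t > ψ(x)} and v restricted to Σ coincides with v₀; moreover such a v is unique in a neighborhood of Σ. -/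

import Mathlib

open Real Filter

/-- partial derivative in `t` of a function `u(t,x)` -/
noncomputable def ptd {n : ℕ} (u : ℝ → (Fin n → ℝ) → ℝ) (t : ℝ) (x : Fin n → ℝ) : ℝ :=
  deriv (fun s => u s x) t

/-- partial derivative in `x i` of a function `u(t,x)` -/
noncomputable def pxd {n : ℕ} (i : Fin n) (u : ℝ → (Fin n → ℝ) → ℝ) (t : ℝ)
    (x : Fin n → ℝ) : ℝ :=
  deriv (fun y => u t (Function.update x i y)) (x i)

/-- Laplacian in `x` of a function `u(t,x)` -/
noncomputable def lapx {n : ℕ} (u : ℝ → (Fin n → ℝ) → ℝ) (t : ℝ) (x : Fin n → ℝ) : ℝ :=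
  ∑ i, pxd i (pxd i u) t x

/-- gradient in `x` of a function `u(t,x)` -/
noncomputable def gradx {n : ℕ} (u : ℝ → (Fin n → ℝ) → ℝ) (t : ℝ) (x : Fin n → ℝ) :
    Fin n → ℝ :=
  fun i => pxd i u t x

/-- gradient of a function of `x` alone -/
noncomputable def gradp {n : ℕ} (ψ : (Fin n → ℝ) → ℝ) (x : Fin n → ℝ) : Fin n → ℝ :=
  fun i => deriv (fun y => ψ (Function.update x i y)) (x i)

/-- `g(t,x;τ,ξ)` is a polynomial homogeneous of degree `l` in `(τ,ξ) ∈ ℝ × ℝⁿ` whose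
coefficients are real-analytic functions of `(t,x)` on `U`. -/
def HomogPoly {n : ℕ} (l : ℕ) (U : Set (ℝ × (Fin n → ℝ)))
    (g : ℝ → (Fin n → ℝ) → ℝ → (Fin n → ℝ) → ℝ) : Prop :=
  ∃ c : (Fin l → Fin (n + 1)) → ℝ → (Fin n → ℝ) → ℝ,
    (∀ μ, AnalyticOnNhd ℝ (fun p : ℝ × (Fin n → ℝ) => c μ p.1 p.2) U) ∧
    ∀ t x τ ξ, g t x τ ξ = ∑ μ : Fin l → Fin (n + 1), c μ t x * ∏ k, (Fin.cons τ ξ : Fin (n + 1) → ℝ) (μ k)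

/-- `u` solves the nonlinear wave equation `u_tt - Δu = f₂ + f₁ + f₀ (t,x; ∂_t u, ∇u)`
at every point of `S`. -/
def SolvesWave {n : ℕ} (f₂ f₁ f₀ : ℝ → (Fin n → ℝ) → ℝ → (Fin n → ℝ) → ℝ)
    (u : ℝ → (Fin n → ℝ) → ℝ) (S : Set (ℝ × (Fin n → ℝ))) : Prop :=
  ∀ t x, (t, x) ∈ S →
    ptd (ptd u) t x - lapx u t x =
      f₂ t x (ptd u t x) (gradx u t x) + f₁ t x (ptd u t x) (gradx u t x)
        + f₀ t x (ptd u t x) (gradx u t x)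

/-! In the coordinates `(t - ψ x, x - x₀)`, whose first component we denote by `s`, the assumption
on `a` makes the terms in `s⁻²` cancel, and `-a log s + w` solves the wave equation if and only if
`s ∂_s² w + 2 ∂_s w = E w`, where every second derivative of `w` in `E w` is multiplied by `s` and
at least one of its derivatives is tangential. Take `y = s ∂_s² w + 2 ∂_s w` as the new unknown:
`w` is recovered from `y` and the trace of `w` by dividing the coefficient of `s ^ k` by `(k + 1)
(k + 2)` and multiplying by `s`. The equation becomes a fixed-point equation `y = T y` between
power series, in which the coefficients of `T y` of order `k` in `s` involve only coefficients of
`y` of order less than `k`; hence there is exactly one formal solution.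

For convergence, the coefficient at `α` is weighted by `ρ ^ α₀ r ^ |α| (∏ i, αᵢ!) / |α|!`. The
resulting `ℓ¹` norm is submultiplicative, and it makes `∂_s⁻¹ ∂_j` bounded with norm at most `ρ`,
so that the loss of a tangential derivative costs nothing and `T` preserves a ball when `ρ` is
small. The local solutions obtained in this way are glued by uniqueness, continued along vertical
segments. -/

section PowerSeries

open MvPowerSeries (coeff)
open Finsupp (single)
open Finset.HasAntidiagonal (antidiagonal mem_antidiagonal)

variable {σ : Type*} {F G : MvPowerSeries σ ℝ} {f g : (σ → ℝ) → ℝ} {r r' : ℝ}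

/-- Absolute convergence of the power series `F` on the closed polydisc of radius `r`. -/
def AbsSummableAt (F : MvPowerSeries σ ℝ) (r : ℝ) : Prop :=
  Summable fun α => |coeff α F| * r ^ α.degree

lemma AbsSummableAt.mono (h : AbsSummableAt F r) (h0 : 0 ≤ r') (hr : r' ≤ r) :
    AbsSummableAt F r' :=
  Summable.of_nonneg_of_le (fun α => by positivity) (fun α => by gcongr) h

lemma hasSum_cauchyProduct [DecidableEq σ] {a b : (σ →₀ ℕ) → ℝ} (ha : Summable fun α => ‖a α‖)
    (hb : Summable fun α => ‖b α‖) :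
    HasSum (fun α => ∑ p ∈ antidiagonal α, a p.1 * b p.2)
      ((∑' α, a α) * ∑' α, b α) := by
  have hab := summable_mul_of_summable_norm ha hb
  rw [ha.of_norm.tsum_mul_tsum_eq_tsum_sum_antidiagonal hb.of_norm hab]
  exact (summable_sum_mul_antidiagonal_of_summable_mul hab).hasSum

lemma sum_antidiagonal_mul_mul {A R : Type*} [AddMonoid A] [Finset.HasAntidiagonal A]
    [CommSemiring R] (a b m : A → R) (hm : ∀ α β, m (α + β) = m α * m β) (α : A) :
    ∑ p ∈ antidiagonal α, (a p.1 * m p.1) * (b p.2 * m p.2) =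
      (∑ p ∈ antidiagonal α, a p.1 * b p.2) * m α := by
  rw [Finset.sum_mul]
  refine Finset.sum_congr rfl fun p hp => ?_
  rw [← mem_antidiagonal.1 hp, hm]
  ring

lemma abs_coeff_mul_le [DecidableEq σ] (F G : MvPowerSeries σ ℝ) (α : σ →₀ ℕ) :
    |coeff α (F * G)| ≤ ∑ p ∈ antidiagonal α, |coeff p.1 F| * |coeff p.2 G| := by
  simp only [MvPowerSeries.coeff_mul, ← abs_mul]
  exact Finset.abs_sum_le_sum_abs _ _

lemma AbsSummableAt.mul (hF : AbsSummableAt F r) (hG : AbsSummableAt G r) (hr : 0 ≤ r) :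
    AbsSummableAt (F * G) r := by
  classical
  refine Summable.of_nonneg_of_le (fun α => by positivity) (fun α => ?_)
    (hasSum_cauchyProduct hF.norm hG.norm).summable
  rw [sum_antidiagonal_mul_mul (fun α => |coeff α F|) (fun α => |coeff α G|)
    (fun α => r ^ α.degree) (fun α β => by rw [map_add, pow_add])]
  exact mul_le_mul_of_nonneg_right (abs_coeff_mul_le F G α) (by positivity)

variable [Fintype σ]

/-- The value at `x` of the monomial with exponent `α`. -/
noncomputable def monomialValue (x : σ → ℝ) (α : σ →₀ ℕ) : ℝ := ∏ i, x i ^ α i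

@[simp]
lemma monomialValue_zero (x : σ → ℝ) : monomialValue x 0 = 1 := by simp [monomialValue]

lemma monomialValue_add (x : σ → ℝ) (α β : σ →₀ ℕ) :
    monomialValue x (α + β) = monomialValue x α * monomialValue x β := by
  simp [monomialValue, pow_add, Finset.prod_mul_distrib]

@[simp]
lemma monomialValue_single_one (x : σ → ℝ) (j : σ) : monomialValue x (single j 1) = x j := by
  classical
  simp [monomialValue, Finsupp.single_apply, pow_ite]

lemma monomialValue_zero_left {α : σ →₀ ℕ} (hα : α ≠ 0) : monomialValue 0 α = 0 := by
  obtain ⟨i, hi⟩ := Finsupp.ne_iff.1 hα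
  exact Finset.prod_eq_zero (Finset.mem_univ i) (by simpa using hi)

lemma abs_monomialValue_le {x : σ → ℝ} {r : ℝ} (hx : ‖x‖ ≤ r) (α : σ →₀ ℕ) :
    |monomialValue x α| ≤ r ^ α.degree := by
  rw [monomialValue, Finset.abs_prod, Finsupp.degree_eq_sum, ← Finset.prod_pow_eq_pow_sum]
  refine Finset.prod_le_prod (fun i _ => abs_nonneg _) (fun i _ => ?_)
  rw [abs_pow]
  exact pow_le_pow_left₀ (abs_nonneg _) ((norm_le_pi_norm x i).trans hx) _

/-- The power series `F` converges absolutely on the closed polydisc of radius `r`, and its sum is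
`f` on the open one. -/
def HasSumOnBall (F : MvPowerSeries σ ℝ) (r : ℝ) (f : (σ → ℝ) → ℝ) : Prop :=
  AbsSummableAt F r ∧ ∀ x, ‖x‖ < r → HasSum (fun α => coeff α F * monomialValue x α) (f x)

/-- `f` is the sum of the power series `F` on some neighbourhood of the origin. -/
def HasExpansion (F : MvPowerSeries σ ℝ) (f : (σ → ℝ) → ℝ) : Prop := ∃ r > 0, HasSumOnBall F r f

lemma AbsSummableAt.summable_norm (h : AbsSummableAt F r) {x : σ → ℝ} (hx : ‖x‖ ≤ r) :
    Summable fun α => ‖coeff α F * monomialValue x α‖ := by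
  refine Summable.of_nonneg_of_le (fun α => norm_nonneg _) (fun α => ?_) h
  rw [norm_mul]
  exact mul_le_mul_of_nonneg_left (abs_monomialValue_le hx α) (abs_nonneg _)

lemma AbsSummableAt.exists_hasSumOnBall (h : AbsSummableAt F r) : ∃ f, HasSumOnBall F r f :=
  ⟨fun x => ∑' α, coeff α F * monomialValue x α, h, fun _ hx =>
    (h.summable_norm hx.le).of_norm.hasSum⟩

lemma HasSumOnBall.mono (h : HasSumOnBall F r f) (h0 : 0 ≤ r') (hr : r' ≤ r) :
    HasSumOnBall F r' f :=
  ⟨h.1.mono h0 hr, fun x hx => h.2 x (hx.trans_le hr)⟩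

lemma HasExpansion.eventuallyEq (hf : HasExpansion F f) (hg : HasExpansion F g) :
    f =ᶠ[nhds 0] g := by
  obtain ⟨r, hr, hf⟩ := hf
  obtain ⟨r', hr', hg⟩ := hg
  filter_upwards [Metric.ball_mem_nhds 0 (lt_min hr hr')] with x hx
  rw [mem_ball_zero_iff, lt_min_iff] at hx
  exact (hf.2 x hx.1).unique (hg.2 x hx.2)

namespace HasExpansion

lemma exists_common_radius (hf : HasExpansion F f) (hg : HasExpansion G g) :
    ∃ r > 0, HasSumOnBall F r f ∧ HasSumOnBall G r g := by
  obtain ⟨r, hr, hf⟩ := hf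
  obtain ⟨r', hr', hg⟩ := hg
  exact ⟨min r r', lt_min hr hr', hf.mono (lt_min hr hr').le (min_le_left _ _),
    hg.mono (lt_min hr hr').le (min_le_right _ _)⟩

lemma of_eq_zero_of_notMem (s : Finset (σ →₀ ℕ)) (hs : ∀ α ∉ s, coeff α F = 0)
    (hf : ∀ x, ∑ α ∈ s, coeff α F * monomialValue x α = f x) : HasExpansion F f := by
  refine ⟨1, one_pos, summable_of_ne_finset_zero (s := s) fun α hα => by simp [hs α hα],
    fun x _ => ?_⟩
  rw [← hf x]
  exact hasSum_sum_of_ne_finset_zero fun α hα => by simp [hs α hα]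

protected lemma C (c : ℝ) : HasExpansion (MvPowerSeries.C c : MvPowerSeries σ ℝ) fun _ => c := by
  classical
  exact of_eq_zero_of_notMem {0} (fun α hα => by
    simp_all [MvPowerSeries.coeff_C]) (by simp)

protected lemma X (j : σ) : HasExpansion (MvPowerSeries.X j : MvPowerSeries σ ℝ) fun x => x j := by
  classical
  exact of_eq_zero_of_notMem {single j 1} (fun α hα => by
    simp_all [MvPowerSeries.coeff_X]) (by simp [MvPowerSeries.coeff_X])

lemma add (hf : HasExpansion F f) (hg : HasExpansion G g) :
    HasExpansion (F + G) fun x => f x + g x := by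
  obtain ⟨r, hr, hf, hg⟩ := hf.exists_common_radius hg
  refine ⟨r, hr, ?_, fun x hx => ?_⟩
  · refine Summable.of_nonneg_of_le (fun α => by positivity) (fun α => ?_) (Summable.add hf.1 hg.1)
    rw [← add_mul, map_add]
    gcongr
    exact abs_add_le _ _
  · simpa only [map_add, add_mul] using (hf.2 x hx).add (hg.2 x hx)

lemma mul (hf : HasExpansion F f) (hg : HasExpansion G g) :
    HasExpansion (F * G) fun x => f x * g x := by
  classical
  obtain ⟨r, hr, hf, hg⟩ := hf.exists_common_radius hg
  refine ⟨r, hr, hf.1.mul hg.1 hr.le, fun x hx => ?_⟩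
  have h := hasSum_cauchyProduct (hf.1.summable_norm hx.le) (hg.1.summable_norm hx.le)
  rw [(hf.2 x hx).tsum_eq, (hg.2 x hx).tsum_eq] at h
  simpa only [sum_antidiagonal_mul_mul (coeff · F) (coeff · G) _ (monomialValue_add x),
    ← MvPowerSeries.coeff_mul] using h

lemma sub (hf : HasExpansion F f) (hg : HasExpansion G g) :
    HasExpansion (F - G) fun x => f x - g x := by
  simpa [sub_eq_add_neg] using hf.add ((HasExpansion.C (-1)).mul hg)

lemma apply_zero (h : HasExpansion F f) : f 0 = coeff 0 F := by
  obtain ⟨r, hr, h⟩ := h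
  have hsum := hasSum_single (f := fun α => coeff α F * monomialValue 0 α) 0
    fun α hα => by simp [monomialValue_zero_left hα]
  rw [(h.2 0 (by simpa using hr)).unique hsum]
  simp

end HasExpansion

end PowerSeries

section PartialDerivatives

open MvPowerSeries (coeff pderiv)
open Finsupp (single)

variable {σ : Type*}

lemma exists_eq_add_single {α : σ →₀ ℕ} {j : σ} (hj : α j ≠ 0) : ∃ β, α = β + single j 1 :=
  ⟨α - single j 1, (tsub_add_cancel_of_le (by simpa using Nat.one_le_iff_ne_zero.2 hj)).symm⟩

lemma exists_eq_add_single_of_degree_eq_succ {α : σ →₀ ℕ} {d : ℕ} (hα : α.degree = d + 1) :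
    ∃ β j, α = β + single j 1 ∧ β.degree = d := by
  have hα0 : α ≠ 0 := by rintro rfl; simp at hα
  obtain ⟨j, hj⟩ := Finsupp.ne_iff.1 hα0
  obtain ⟨β, rfl⟩ := exists_eq_add_single hj
  exact ⟨β, j, rfl, by simpa using hα⟩

lemma hasSum_add_single_iff (j : σ) {a : (σ →₀ ℕ) → ℝ} (ha : ∀ α, α j = 0 → a α = 0) {s : ℝ} :
    HasSum (fun β => a (β + single j 1)) s ↔ HasSum a s := by
  refine (add_left_injective (single j 1)).hasSum_iff fun α hα => ha α ?_
  contrapose! hα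
  obtain ⟨β, rfl⟩ := exists_eq_add_single hα
  exact ⟨β, rfl⟩

/-- The partial derivative in direction `j` of a function of finitely many real variables. -/
noncomputable def partialDeriv [DecidableEq σ] (j : σ) (f : (σ → ℝ) → ℝ) (x : σ → ℝ) : ℝ :=
  deriv (fun y => f (Function.update x j y)) (x j)

lemma tendsto_update [DecidableEq σ] (x : σ → ℝ) (j : σ) :
    Tendsto (fun y => Function.update x j y) (nhds (x j)) (nhds x) := by
  simpa using ((continuous_const (y := x)).update j continuous_id).tendsto (x j)

lemma partialDeriv_congr [DecidableEq σ] {f g : (σ → ℝ) → ℝ} {x : σ → ℝ}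
    (h : f =ᶠ[nhds x] g) (j : σ) : partialDeriv j f x = partialDeriv j g x :=
  EventuallyEq.deriv_eq ((tendsto_update x j).eventually h)

lemma exists_mul_pow_pred_le {r r' : ℝ} (h0 : 0 < r') (hr : r' < r) :
    ∃ C, ∀ d : ℕ, (d : ℝ) * r' ^ (d - 1) ≤ C * r ^ d := by
  have hr0 := h0.trans hr
  obtain ⟨C, hC⟩ := (tendsto_self_mul_const_pow_of_lt_one (div_pos h0 hr0).le
    ((div_lt_one hr0).2 hr)).bddAbove_range
  refine ⟨C / r', fun d => ?_⟩
  have hCd : (d : ℝ) * (r' / r) ^ d ≤ C := hC ⟨d, rfl⟩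
  rw [div_pow, ← mul_div_assoc, div_le_iff₀ (pow_pos hr0 d)] at hCd
  rw [div_mul_eq_mul_div, le_div_iff₀ h0]
  rcases d with _ | d
  · simpa using hCd
  · rwa [Nat.add_sub_cancel, mul_assoc, ← pow_succ]

variable {F : MvPowerSeries σ ℝ} {f : (σ → ℝ) → ℝ} {r r' : ℝ}

lemma AbsSummableAt.summable_mul_pow_pred (h : AbsSummableAt F r) (h0 : 0 < r') (hr : r' < r)
    (j : σ) : Summable fun α => |coeff α F| * (α j * r' ^ (α.degree - 1)) := by
  obtain ⟨C, hC⟩ := exists_mul_pow_pred_le h0 hr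
  refine Summable.of_nonneg_of_le (fun α => by positivity) (fun α => ?_) (Summable.mul_left C h)
  have hα : (α j : ℝ) ≤ α.degree := by exact_mod_cast Finsupp.le_degree j α
  calc |coeff α F| * (α j * r' ^ (α.degree - 1))
      ≤ |coeff α F| * (C * r ^ α.degree) := by
        refine mul_le_mul_of_nonneg_left ?_ (abs_nonneg _)
        exact (mul_le_mul_of_nonneg_right hα (by positivity)).trans (hC _)
    _ = C * (|coeff α F| * r ^ α.degree) := by ring

lemma AbsSummableAt.pderiv (h : AbsSummableAt F r) (h0 : 0 < r') (hr : r' < r) (j : σ) :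
    AbsSummableAt (pderiv ℝ j F) r' := by
  refine ((hasSum_add_single_iff j fun α hα => ?_).2
    (h.summable_mul_pow_pred h0 hr j).hasSum).summable.congr fun β => ?_
  · simp [hα]
  · have hβ : (0 : ℝ) ≤ β j + 1 := by positivity
    simp [MvPowerSeries.coeff_pderiv, abs_mul, abs_of_nonneg hβ, mul_assoc]

variable [Fintype σ]

lemma monomialValue_update [DecidableEq σ] (x : σ → ℝ) (j : σ) (y : ℝ) (α : σ →₀ ℕ) :
    monomialValue (Function.update x j y) α = y ^ α j * monomialValue x (α.erase j) := by
  simp only [monomialValue, ← Finset.mul_prod_erase _ _ (Finset.mem_univ j),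
    Function.update_self, Finsupp.erase_same, pow_zero, one_mul]
  congr 1
  refine Finset.prod_congr rfl fun i hi => ?_
  have hij := Finset.ne_of_mem_erase hi
  rw [Function.update_of_ne hij, Finsupp.erase_ne hij]

lemma hasDerivAt_monomialValue_update [DecidableEq σ] (x : σ → ℝ) (j : σ) (y : ℝ) (α : σ →₀ ℕ) :
    HasDerivAt (fun y => monomialValue (Function.update x j y) α)
      (α j * monomialValue (Function.update x j y) (α - single j 1)) y := by
  have herase : (α - single j 1).erase j = α.erase j := by
    ext i
    rcases eq_or_ne i j with rfl | hij
    · simp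
    · simp [Finsupp.erase_ne hij, Finsupp.single_eq_of_ne hij]
  simp only [monomialValue_update, herase]
  simpa [mul_assoc] using (hasDerivAt_pow (α j) y).mul_const (monomialValue x (α.erase j))

lemma abs_mul_monomialValue_sub_single_le {x : σ → ℝ} (hx : ‖x‖ ≤ r) (j : σ) (α : σ →₀ ℕ) :
    |α j * monomialValue x (α - single j 1)| ≤ α j * r ^ (α.degree - 1) := by
  rcases eq_or_ne (α j) 0 with h0 | hj
  · simp [h0]
  obtain ⟨β, rfl⟩ := exists_eq_add_single hj
  rw [abs_mul, Nat.abs_cast]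
  gcongr
  simpa using abs_monomialValue_le hx β

lemma norm_update_lt [DecidableEq σ] {x : σ → ℝ} (hx : ‖x‖ < r) (j : σ) {y : ℝ} (hy : ‖y‖ < r) :
    ‖Function.update x j y‖ < r := by
  refine (pi_norm_lt_iff ((norm_nonneg x).trans_lt hx)).2 fun i => ?_
  rcases eq_or_ne i j with rfl | hij
  · simpa using hy
  · simpa [Function.update_of_ne hij] using (norm_le_pi_norm x i).trans_lt hx

lemma HasSumOnBall.hasDerivAt_update [DecidableEq σ] (h : HasSumOnBall F r f) (h0 : 0 < r')
    (hr : r' < r) (j : σ) {x : σ → ℝ} (hx : ‖x‖ < r') :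
    HasDerivAt (fun y => f (Function.update x j y))
      (∑' α, coeff α F * (α j * monomialValue x (α - single j 1))) (x j) := by
  have hxj : x j ∈ Metric.ball (0 : ℝ) r' := by
    simpa using (norm_le_pi_norm x j).trans_lt hx
  have hball : ∀ y ∈ Metric.ball (0 : ℝ) r', ‖Function.update x j y‖ < r' := fun y hy =>
    norm_update_lt hx j (by simpa using hy)
  have hderiv := hasDerivAt_tsum_of_isPreconnected (h.1.summable_mul_pow_pred h0 hr j)
    Metric.isOpen_ball (convex_ball _ _).isPreconnected
    (fun α y _ => (hasDerivAt_monomialValue_update x j y α).const_mul (coeff α F))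
    (fun α y hy => by
      rw [norm_mul]
      gcongr
      · exact le_rfl
      · exact abs_mul_monomialValue_sub_single_le (hball y hy).le j α)
    hxj (by simpa using (h.1.summable_norm (hx.trans hr).le).of_norm) hxj
  rw [Function.update_eq_self] at hderiv
  refine hderiv.congr_of_eventuallyEq ?_
  filter_upwards [Metric.isOpen_ball.mem_nhds hxj] with y hy
  exact (h.2 _ ((hball y hy).trans hr)).tsum_eq.symm

lemma HasSumOnBall.pderiv [DecidableEq σ] (h : HasSumOnBall F r f) (h0 : 0 < r') (hr : r' < r)
    (j : σ) : HasSumOnBall (pderiv ℝ j F) r' (partialDeriv j f) := by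
  refine ⟨h.1.pderiv h0 hr j, fun x hx => ?_⟩
  rw [partialDeriv, (h.hasDerivAt_update h0 hr j hx).deriv]
  have hsum : Summable fun α => coeff α F * (α j * monomialValue x (α - single j 1)) :=
    .of_norm_bounded (h.1.summable_mul_pow_pred h0 hr j) fun α => by
      rw [norm_mul]
      exact mul_le_mul_of_nonneg_left (abs_mul_monomialValue_sub_single_le hx.le j α) (abs_nonneg _)
  convert (hasSum_add_single_iff j fun α hα => ?_).2 hsum.hasSum using 2 with β
  · simp [MvPowerSeries.coeff_pderiv, mul_assoc]
  · simp [hα]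

namespace HasExpansion

lemma pderiv [DecidableEq σ] (h : HasExpansion F f) (j : σ) :
    HasExpansion (pderiv ℝ j F) (partialDeriv j f) := by
  obtain ⟨r, hr, h⟩ := h
  exact ⟨r / 2, by positivity, h.pderiv (by positivity) (by linarith) j⟩

lemma eq_zero (h : HasExpansion F f) (hf : f =ᶠ[nhds 0] 0) : F = 0 := by
  classical
  suffices key : ∀ (d : ℕ) (α : σ →₀ ℕ), α.degree = d → ∀ F f, HasExpansion F f →
      f =ᶠ[nhds 0] 0 → coeff α F = 0 from
    MvPowerSeries.ext fun α => key _ α rfl F f h hf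
  intro d
  induction d with
  | zero =>
    intro α hα F f h hf
    rw [(Finsupp.degree_eq_zero_iff α).1 hα, ← h.apply_zero, hf.self_of_nhds, Pi.zero_apply]
  | succ d ih =>
    intro α hα F f h hf
    obtain ⟨β, j, rfl, hβ⟩ := exists_eq_add_single_of_degree_eq_succ hα
    have hpderiv := ih β hβ _ _ (h.pderiv j) (by
      filter_upwards [hf.eventuallyEq_nhds] with x hx
      rw [partialDeriv_congr hx]; simp [partialDeriv])
    rw [MvPowerSeries.coeff_pderiv] at hpderiv
    exact (mul_eq_zero.1 hpderiv).resolve_right (by positivity)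

lemma unique {G : MvPowerSeries σ ℝ} {g : (σ → ℝ) → ℝ} (hf : HasExpansion F f)
    (hg : HasExpansion G g) (hfg : f =ᶠ[nhds 0] g) : F = G := by
  refine sub_eq_zero.1 ((hf.sub hg).eq_zero ?_)
  filter_upwards [hfg] with x hx
  simp [hx]

end HasExpansion

end PartialDerivatives

section Analyticity

open MvPowerSeries (coeff)
open Finsupp (single)

variable {σ : Type*}

/-- The exponent of the monomial obtained by multiplying out the word `e` in the variables. -/
noncomputable def wordExponent {m : ℕ} (e : Fin m → σ) : σ →₀ ℕ := ∑ k, single (e k) 1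

lemma degree_wordExponent {m : ℕ} (e : Fin m → σ) : (wordExponent e).degree = m := by
  simp [wordExponent, map_sum]

lemma exists_wordExponent_eq {m : ℕ} : ∀ {α : σ →₀ ℕ}, α.degree = m →
    ∃ e : Fin m → σ, wordExponent e = α := by
  induction m with
  | zero =>
    intro α hα
    exact ⟨Fin.elim0, by simp [wordExponent, (Finsupp.degree_eq_zero_iff α).1 hα]⟩
  | succ m ih =>
    intro α hα
    obtain ⟨β, j, rfl, hβ⟩ := exists_eq_add_single_of_degree_eq_succ hα
    obtain ⟨e, rfl⟩ := ih hβ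
    exact ⟨Fin.cons j e, by simp [wordExponent, Fin.sum_univ_succ, add_comm]⟩

variable [Fintype σ]

lemma monomialValue_wordExponent {m : ℕ} (e : Fin m → σ) (x : σ → ℝ) :
    monomialValue x (wordExponent e) = ∏ k, x (e k) := by
  induction m with
  | zero => simp [wordExponent]
  | succ m ih =>
    rw [Fin.prod_univ_succ, ← ih fun k => e k.succ, wordExponent, Fin.sum_univ_succ,
      monomialValue_add, monomialValue_single_one, wordExponent]

/-- The multilinear form whose diagonal is the monomial spelled by the word `e`. -/
noncomputable def wordForm {m : ℕ} (e : Fin m → σ) :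
    ContinuousMultilinearMap ℝ (fun _ : Fin m => σ → ℝ) ℝ :=
  (ContinuousMultilinearMap.mkPiAlgebra ℝ (Fin m) ℝ).compContinuousLinearMap
    fun k => ContinuousLinearMap.proj (e k)

lemma norm_wordForm_le {m : ℕ} (e : Fin m → σ) : ‖wordForm e‖ ≤ 1 := by
  refine ContinuousMultilinearMap.opNorm_le_bound zero_le_one fun x => ?_
  simp only [wordForm, ContinuousMultilinearMap.compContinuousLinearMap_apply,
    ContinuousMultilinearMap.mkPiAlgebra_apply, ContinuousLinearMap.proj_apply, norm_prod, one_mul]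
  exact Finset.prod_le_prod (fun _ _ => norm_nonneg _) fun _ _ => norm_le_pi_norm _ _

lemma wordForm_diagonal {m : ℕ} (e : Fin m → σ) (x : σ → ℝ) :
    wordForm e (fun _ => x) = monomialValue x (wordExponent e) := by
  simp [wordForm, monomialValue_wordExponent]

noncomputable instance (m : ℕ) : Fintype {α : σ →₀ ℕ // α.degree = m} :=
  (Finsupp.finite_of_degree_eq m).fintype

/-- The formal multilinear series on `σ → ℝ` with the same homogeneous parts as the power series
`F`. -/
noncomputable def toFormalMultilinearSeries (F : MvPowerSeries σ ℝ) :
    FormalMultilinearSeries ℝ (σ → ℝ) ℝ := fun m =>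
  ∑ α : {α : σ →₀ ℕ // α.degree = m}, coeff α.1 F • wordForm (exists_wordExponent_eq α.2).choose

lemma toFormalMultilinearSeries_diagonal (F : MvPowerSeries σ ℝ) (m : ℕ) (x : σ → ℝ) :
    toFormalMultilinearSeries F m (fun _ => x) =
      ∑ α : {α : σ →₀ ℕ // α.degree = m}, coeff α.1 F * monomialValue x α.1 := by
  simp only [toFormalMultilinearSeries, _root_.sum_apply, _root_.smul_apply, wordForm_diagonal,
    smul_eq_mul]
  exact Finset.sum_congr rfl fun α _ => by rw [(exists_wordExponent_eq α.2).choose_spec]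

lemma norm_toFormalMultilinearSeries_le (F : MvPowerSeries σ ℝ) (m : ℕ) :
    ‖toFormalMultilinearSeries F m‖ ≤ ∑ α : {α : σ →₀ ℕ // α.degree = m}, |coeff α.1 F| := by
  refine (norm_sum_le _ _).trans (Finset.sum_le_sum fun α _ => ?_)
  rw [norm_smul]
  exact mul_le_of_le_one_right (norm_nonneg _) (norm_wordForm_le _)

variable {F : MvPowerSeries σ ℝ} {f : (σ → ℝ) → ℝ} {r : ℝ}

lemma AbsSummableAt.summable_norm_toFormalMultilinearSeries (h : AbsSummableAt F r) (hr : 0 ≤ r) :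
    Summable fun m => ‖toFormalMultilinearSeries F m‖ * r ^ m := by
  have hsigma := ((Equiv.sigmaFiberEquiv (Finsupp.degree (σ := σ) (R := ℕ))).summable_iff.2 h).sigma
  refine Summable.of_nonneg_of_le (fun m => by positivity) (fun m => ?_) hsigma
  calc ‖toFormalMultilinearSeries F m‖ * r ^ m
      ≤ (∑ α : {α : σ →₀ ℕ // α.degree = m}, |coeff α.1 F|) * r ^ m := by
        gcongr
        exact norm_toFormalMultilinearSeries_le F m
    _ = ∑ α : {α : σ →₀ ℕ // α.degree = m}, |coeff α.1 F| * r ^ α.1.degree := by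
        rw [Finset.sum_mul]
        exact Finset.sum_congr rfl fun α _ => by rw [α.2]
    _ = _ := (tsum_fintype _).symm

lemma HasSumOnBall.hasFPowerSeriesOnBall (h : HasSumOnBall F r f) (hr : 0 < r) :
    HasFPowerSeriesOnBall f (toFormalMultilinearSeries F) 0 (ENNReal.ofReal r) := by
  refine ⟨?_, by simpa using hr, fun {y} hy => ?_⟩
  · refine (toFormalMultilinearSeries F).le_radius_of_summable (r := r.toNNReal) ?_
    simpa only [Real.coe_toNNReal _ hr.le] using h.1.summable_norm_toFormalMultilinearSeries hr.le
  · have hy' : ‖y‖ < r := by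
      rw [Metric.eball_ofReal] at hy
      simpa using hy
    rw [zero_add]
    refine ((Equiv.sigmaFiberEquiv (Finsupp.degree (σ := σ) (R := ℕ))).hasSum_iff.2
      (h.2 y hy')).sigma fun m => ?_
    rw [toFormalMultilinearSeries_diagonal]
    exact hasSum_fintype _

lemma HasExpansion.analyticAt (h : HasExpansion F f) : AnalyticAt ℝ f 0 := by
  obtain ⟨r, hr, h⟩ := h
  exact (h.hasFPowerSeriesOnBall hr).analyticAt

lemma HasExpansion.of_hasSum {ω : Type*} {d : ω → σ →₀ ℕ} {a : ω → ℝ} (hr : 0 < r)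
    (ha : Summable fun w => |a w| * r ^ (d w).degree)
    (hf : ∀ x : σ → ℝ, ‖x‖ < r → HasSum (fun w => a w * monomialValue x (d w)) (f x)) :
    ∃ F, HasExpansion F f := by
  let E := Equiv.sigmaFiberEquiv d
  let F : MvPowerSeries σ ℝ := fun α => ∑' w : {w // d w = α}, a w.1
  have hcoeff : ∀ α, coeff α F = ∑' w : {w // d w = α}, a w.1 := fun α => rfl
  have hfiber : ∀ {b : ω → ℝ} {m : (σ →₀ ℕ) → ℝ} (α : σ →₀ ℕ) (w : {w // d w = α}),
      ((fun w => b w * m (d w)) ∘ E) ⟨α, w⟩ = b w.1 * m α := by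
    rintro b m _ ⟨w, rfl⟩
    simp only [Function.comp, E, Equiv.sigmaFiberEquiv_apply]
  refine ⟨F, r, hr, ?_, fun x hx => ?_⟩
  · have hsum := E.summable_iff.2 ha
    refine Summable.of_nonneg_of_le (fun α => by positivity) (fun α => ?_) hsum.sigma
    have hα := hsum.sigma_factor α
    simp only [hfiber (b := fun w => |a w|) (m := fun α => r ^ α.degree)] at hα ⊢
    have hpow : r ^ α.degree ≠ 0 := by positivity
    have hnorm : Summable fun w : {w // d w = α} => ‖a w.1‖ := (summable_mul_right_iff hpow).1 hα
    rw [tsum_mul_right, hcoeff]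
    exact mul_le_mul_of_nonneg_right (norm_tsum_le_tsum_norm hnorm) (by positivity)
  · have hsum := E.hasSum_iff.2 (hf x hx)
    refine hsum.sigma fun α => ?_
    have hα := (hsum.summable.sigma_factor α).hasSum
    simp only [hfiber (b := a) (m := monomialValue x)] at hα ⊢
    rwa [tsum_mul_right, ← hcoeff] at hα

lemma multilinear_diagonal_eq_sum_words [DecidableEq σ] {m : ℕ}
    (M : ContinuousMultilinearMap ℝ (fun _ : Fin m => σ → ℝ) ℝ) (x : σ → ℝ) :
    M (fun _ => x) =
      ∑ e : Fin m → σ, M (fun k => Pi.single (e k) 1) * monomialValue x (wordExponent e) := by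
  have hx : x = ∑ j, x j • (Pi.single j 1 : σ → ℝ) := by
    ext i
    simp [Finset.sum_apply, Pi.single_apply]
  conv_lhs => rw [hx]
  rw [ContinuousMultilinearMap.map_sum]
  refine Finset.sum_congr rfl fun e _ => ?_
  rw [ContinuousMultilinearMap.map_smul_univ, monomialValue_wordExponent, smul_eq_mul, mul_comm]

lemma abs_multilinear_basis_le [DecidableEq σ] {m : ℕ}
    (M : ContinuousMultilinearMap ℝ (fun _ : Fin m => σ → ℝ) ℝ) (e : Fin m → σ) :
    |M fun k => Pi.single (e k) 1| ≤ ‖M‖ :=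
  (M.le_opNorm _).trans <| mul_le_of_le_one_right (norm_nonneg _) <|
    Finset.prod_le_one (fun _ _ => norm_nonneg _) fun k _ => by simp [Pi.norm_single]

/-- A word of length `m` is one of `card σ ^ m`, which is why the radius has to shrink by a factor
exceeding `card σ`. -/
lemma summable_words [DecidableEq σ] {p : FormalMultilinearSeries ℝ (σ → ℝ) ℝ} {r : NNReal}
    (hr : r < p.radius) :
    Summable fun w : Σ m, Fin m → σ =>
      |p w.1 fun k => Pi.single (w.2 k) 1| * (r / (2 * (Fintype.card σ + 1)) : ℝ) ^ w.1 := by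
  set N : ℝ := (Fintype.card σ : ℝ) with hN
  have hN0 : 0 ≤ N := Nat.cast_nonneg _
  obtain ⟨C, -, hC⟩ := p.norm_mul_pow_le_of_lt_radius hr
  rw [summable_sigma_of_nonneg fun w => by positivity]
  refine ⟨fun m => Summable.of_finite, Summable.of_nonneg_of_le
    (fun m => tsum_nonneg fun e => by positivity) (fun m => ?_) (summable_geometric_two.mul_left C)⟩
  rw [tsum_fintype]
  calc ∑ e : Fin m → σ, |p m fun k => Pi.single (e k) 1| * (r / (2 * (N + 1))) ^ m
      ≤ ∑ _e : Fin m → σ, ‖p m‖ * (r / (2 * (N + 1))) ^ m := by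
        gcongr with e
        exact abs_multilinear_basis_le (p m) e
    _ = N ^ m * (‖p m‖ * (r / (2 * (N + 1))) ^ m) := by simp [hN]
    _ ≤ (N + 1) ^ m * (‖p m‖ * (r / (2 * (N + 1))) ^ m) := by
        gcongr
        linarith
    _ = ‖p m‖ * r ^ m * (1 / 2) ^ m := by
        rw [div_pow, mul_pow, one_div, inv_pow]
        field_simp
    _ ≤ C * (1 / 2) ^ m := by
        gcongr
        exact hC m

lemma HasExpansion.of_analyticAt (h : AnalyticAt ℝ f 0) : ∃ F, HasExpansion F f := by
  classical
  obtain ⟨p, R, hp⟩ := h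
  obtain ⟨r, hr0, hrR⟩ := ENNReal.lt_iff_exists_nnreal_btwn.1 hp.r_pos
  have hr0' : 0 < (r : ℝ) := by exact_mod_cast hr0
  set t : ℝ := r / (2 * (Fintype.card σ + 1)) with ht
  have ht0 : 0 < t := by positivity
  have htr : t ≤ r := div_le_self hr0'.le (by
    linarith [(Nat.cast_nonneg (Fintype.card σ) : (0 : ℝ) ≤ Fintype.card σ)])
  have habs := summable_words (hrR.trans_le hp.r_le)
  rw [← ht] at habs
  refine HasExpansion.of_hasSum (ω := Σ m, Fin m → σ) (d := fun w => wordExponent w.2) ht0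
    (by simpa only [degree_wordExponent] using habs) fun x hx => ?_
  have hsum : Summable fun w : Σ m, Fin m → σ =>
      (p w.1 fun k => Pi.single (w.2 k) 1) * monomialValue x (wordExponent w.2) :=
    .of_norm_bounded habs fun w => by
      rw [norm_mul]
      refine mul_le_mul_of_nonneg_left ?_ (norm_nonneg _)
      rw [Real.norm_eq_abs]
      simpa only [degree_wordExponent] using abs_monomialValue_le hx.le (wordExponent w.2)
  have hfx : HasSum (fun m => p m fun _ => x) (f x) := by
    have hxR : x ∈ Metric.eball (0 : σ → ℝ) R := Metric.eball_subset_eball hrR.le <| by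
      rw [← ENNReal.ofReal_coe_nnreal, Metric.eball_ofReal, mem_ball_zero_iff]
      exact hx.trans_le htr
    simpa using hp.hasSum hxR
  have hwords := hsum.hasSum.sigma fun m => hasSum_fintype _
  simp only [← multilinear_diagonal_eq_sum_words] at hwords
  rw [hfx.unique hwords]
  exact hsum.hasSum

end Analyticity

section WeightedNorm

open MvPowerSeries (coeff)
open Finsupp (single)
open Finset.HasAntidiagonal (antidiagonal mem_antidiagonal)
open scoped Nat NNReal ENNReal

lemma choose_mul_choose_le (a b c d : ℕ) :
    (a + b).choose a * (c + d).choose c ≤ (a + c + (b + d)).choose (a + c) := by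
  rw [add_add_add_comm, Nat.add_choose_eq (a + b) (c + d)]
  exact Finset.single_le_sum (f := fun p : ℕ × ℕ => (a + b).choose p.1 * (c + d).choose p.2)
    (fun _ _ => Nat.zero_le _) (a := (a, c)) (mem_antidiagonal.2 rfl)

lemma multinomial_mul_multinomial_le {ι : Type*} (s : Finset ι) (f g : ι → ℕ) :
    Nat.multinomial s f * Nat.multinomial s g ≤ Nat.multinomial s (f + g) := by
  classical
  induction s using Finset.induction_on with
  | empty => simp
  | insert i s hi ih =>
    simp only [Nat.multinomial_insert hi, Pi.add_apply, Finset.sum_add_distrib]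
    rw [mul_mul_mul_comm]
    exact Nat.mul_le_mul (choose_mul_choose_le _ _ _ _) ih

lemma multinomial_univ_le_card_pow {ι : Type*} [Fintype ι] (f : ι → ℕ) :
    Nat.multinomial Finset.univ f ≤ Fintype.card ι ^ ∑ i, f i := by
  classical
  have hsum := Finset.sum_pow_eq_sum_piAntidiag (R := ℕ) Finset.univ (fun _ : ι => 1) (∑ i, f i)
  simp only [Finset.sum_const, Finset.card_univ, smul_eq_mul, mul_one, one_pow,
    Finset.prod_const_one, Nat.cast_id] at hsum
  rw [hsum]
  exact Finset.single_le_sum (f := Nat.multinomial Finset.univ) (fun _ _ => Nat.zero_le _)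
    (by simp)

lemma succ_mul_multinomial_add_single {ι : Type*} [Fintype ι] (β : ι →₀ ℕ) (j : ι) :
    (β j + 1) * Nat.multinomial Finset.univ ⇑(β + single j 1 : ι →₀ ℕ) =
      (β.degree + 1) * Nat.multinomial Finset.univ ⇑β := by
  classical
  have hprod : ∏ i, ((β + single j 1 : ι →₀ ℕ) i)! = (β j + 1) * ∏ i, (β i)! := by
    rw [← Finset.mul_prod_erase _ _ (Finset.mem_univ j),
      ← Finset.mul_prod_erase _ (fun i => (β i)!) (Finset.mem_univ j), ← mul_assoc]
    congr 1
    · simp [Nat.factorial_succ]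
    · refine Finset.prod_congr rfl fun i hi => ?_
      simp [Finsupp.single_eq_of_ne (Finset.ne_of_mem_erase hi)]
  have hβ := Nat.multinomial_spec Finset.univ ⇑β
  have hβj := Nat.multinomial_spec Finset.univ ⇑(β + single j 1 : ι →₀ ℕ)
  rw [← Finsupp.degree_eq_sum] at hβ hβj
  rw [hprod, map_add, Finsupp.degree_single, Nat.factorial_succ, ← hβ] at hβj
  have hpos : 0 < ∏ i, (β i)! := Finset.prod_pos fun i _ => Nat.factorial_pos (β i)
  refine Nat.eq_of_mul_eq_mul_left hpos ?_
  linarith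

variable {n : ℕ}

/-- The weight `ρ ^ α₀ * r ^ |α| * α! / |α|!` of the exponent `α`. The small parameter `ρ` is
attached to the distinguished variable of index `0`, and the inverse multinomial coefficient makes
integration in that variable followed by differentiation in another one a bounded operation. -/
noncomputable def expWeight (ρ r : ℝ≥0) (α : Fin (n + 1) →₀ ℕ) : ℝ≥0 :=
  ρ ^ α 0 * r ^ α.degree / Nat.multinomial Finset.univ ⇑α

lemma expWeight_add_le (ρ r : ℝ≥0) (α β : Fin (n + 1) →₀ ℕ) :
    expWeight ρ r (α + β) ≤ expWeight ρ r α * expWeight ρ r β := by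
  have hmul : (Nat.multinomial Finset.univ ⇑α * Nat.multinomial Finset.univ ⇑β : ℝ≥0) ≤
      Nat.multinomial Finset.univ ⇑(α + β) :=
    mod_cast multinomial_mul_multinomial_le Finset.univ ⇑α ⇑β
  have hα : (0 : ℝ≥0) < Nat.multinomial Finset.univ ⇑α := mod_cast Nat.multinomial_pos _ _
  have hβ : (0 : ℝ≥0) < Nat.multinomial Finset.univ ⇑β := mod_cast Nat.multinomial_pos _ _
  calc expWeight ρ r (α + β)
      ≤ ρ ^ (α + β) 0 * r ^ (α + β).degree /
          (Nat.multinomial Finset.univ ⇑α * Nat.multinomial Finset.univ ⇑β) := by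
        unfold expWeight; gcongr
    _ = expWeight ρ r α * expWeight ρ r β := by
        rw [expWeight, expWeight, map_add, Finsupp.add_apply, pow_add, pow_add, mul_mul_mul_comm,
          div_mul_div_comm]

lemma expWeight_add_single (ρ r : ℝ≥0) (β : Fin (n + 1) →₀ ℕ) (j : Fin (n + 1)) :
    expWeight ρ r (β + single j 1) =
      ρ ^ single j 1 0 * r * (β j + 1) / (β.degree + 1) * expWeight ρ r β := by
  have h : ((β j + 1) * Nat.multinomial Finset.univ ⇑(β + single j 1 : Fin (n + 1) →₀ ℕ) : ℝ≥0) =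
      (β.degree + 1) * Nat.multinomial Finset.univ ⇑β :=
    mod_cast succ_mul_multinomial_add_single β j
  have hβ : (0 : ℝ≥0) < Nat.multinomial Finset.univ ⇑β := mod_cast Nat.multinomial_pos _ _
  have hβj : (0 : ℝ≥0) < Nat.multinomial Finset.univ
      ⇑(β + single j 1 : Fin (n + 1) →₀ ℕ) :=
    mod_cast Nat.multinomial_pos _ _
  rw [expWeight, expWeight, map_add, Finsupp.degree_single, Finsupp.add_apply, pow_add, pow_succ,
    div_mul_div_comm, div_eq_div_iff hβj.ne' (by positivity), ← h]
  ring

lemma succ_mul_expWeight_add_single_zero (ρ r : ℝ≥0) (β : Fin (n + 1) →₀ ℕ) {j : Fin (n + 1)}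
    (hj : j ≠ 0) :
    (β j + 1) * expWeight ρ r (β + single 0 1) =
      ρ * (β 0 + 1) * expWeight ρ r (β + single j 1) := by
  rw [expWeight_add_single, expWeight_add_single, Finsupp.single_eq_same,
    Finsupp.single_eq_of_ne hj.symm]
  ring

lemma expWeight_single_zero (ρ r : ℝ≥0) : expWeight ρ r (single (0 : Fin (n + 1)) 1) = ρ * r := by
  simpa [expWeight, Nat.multinomial] using expWeight_add_single ρ r 0 (0 : Fin (n + 1))

lemma expWeight_le_pow {ρ : ℝ≥0} (hρ : ρ ≤ 1) (r : ℝ≥0) (α : Fin (n + 1) →₀ ℕ) :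
    expWeight ρ r α ≤ r ^ α.degree := by
  have hα : (1 : ℝ≥0) ≤ Nat.multinomial Finset.univ ⇑α := mod_cast Nat.multinomial_pos _ _
  calc expWeight ρ r α ≤ 1 * r ^ α.degree / 1 := by
        unfold expWeight; gcongr; exact pow_le_one' hρ _
    _ = r ^ α.degree := by rw [one_mul, div_one]

lemma pow_le_expWeight {ρ : ℝ≥0} (hρ : ρ ≤ 1) (r : ℝ≥0) (α : Fin (n + 1) →₀ ℕ) :
    (ρ * r / (n + 1)) ^ α.degree ≤ expWeight ρ r α := by
  have hα : (Nat.multinomial Finset.univ ⇑α : ℝ≥0) ≤ ((n : ℝ≥0) + 1) ^ α.degree := by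
    have h := multinomial_univ_le_card_pow ⇑α
    rw [← Finsupp.degree_eq_sum, Fintype.card_fin] at h
    exact_mod_cast h
  have hpos : (0 : ℝ≥0) < Nat.multinomial Finset.univ ⇑α := mod_cast Nat.multinomial_pos _ _
  rw [div_pow, mul_pow]
  unfold expWeight
  gcongr ?_ * _ / ?_
  exact pow_le_pow_of_le_one zero_le hρ (Finsupp.le_degree 0 α)

lemma expWeight_le_expWeight_one {ρ : ℝ≥0} (hρ : ρ ≤ 1) (r : ℝ≥0) (α : Fin (n + 1) →₀ ℕ) :
    expWeight ρ r α ≤ expWeight 1 r α := by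
  unfold expWeight
  gcongr

variable {F G : MvPowerSeries (Fin (n + 1)) ℝ}

/-- The `ℓ¹` norm of the coefficients of `F` with weights `expWeight ρ r`. -/
noncomputable def weightedNorm (ρ r : ℝ≥0) (F : MvPowerSeries (Fin (n + 1)) ℝ) : ℝ≥0∞ :=
  ∑' α, (‖coeff α F‖₊ * expWeight ρ r α : ℝ≥0)

lemma weightedNorm_add_le (ρ r : ℝ≥0) (F G : MvPowerSeries (Fin (n + 1)) ℝ) :
    weightedNorm ρ r (F + G) ≤ weightedNorm ρ r F + weightedNorm ρ r G := by
  unfold weightedNorm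
  rw [← ENNReal.tsum_add]
  refine ENNReal.tsum_le_tsum fun α => ?_
  rw [← ENNReal.coe_add, ENNReal.coe_le_coe, ← add_mul, map_add]
  gcongr
  exact nnnorm_add_le _ _

lemma weightedNorm_mul_le (ρ r : ℝ≥0) (F G : MvPowerSeries (Fin (n + 1)) ℝ) :
    weightedNorm ρ r (F * G) ≤ weightedNorm ρ r F * weightedNorm ρ r G := by
  classical
  set a : (Fin (n + 1) →₀ ℕ) → ℝ≥0 := fun α => ‖coeff α F‖₊ * expWeight ρ r α
  set b : (Fin (n + 1) →₀ ℕ) → ℝ≥0 := fun α => ‖coeff α G‖₊ * expWeight ρ r α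
  have hcoeff (α) : ‖coeff α (F * G)‖₊ * expWeight ρ r α ≤
      ∑ p ∈ antidiagonal α, a p.1 * b p.2 := by
    rw [MvPowerSeries.coeff_mul]
    refine (mul_le_mul_left (nnnorm_sum_le _ _) _).trans ?_
    rw [Finset.sum_mul]
    refine Finset.sum_le_sum fun p hp => ?_
    rw [nnnorm_mul, ← mem_antidiagonal.1 hp, mul_mul_mul_comm]
    exact mul_le_mul_right (expWeight_add_le _ _ _ _) _
  calc weightedNorm ρ r (F * G)
      ≤ ∑' α, ∑ p ∈ antidiagonal α, (a p.1 : ℝ≥0∞) * b p.2 :=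
        ENNReal.tsum_le_tsum fun α =>
          (ENNReal.coe_le_coe.2 (hcoeff α)).trans_eq (by push_cast; rfl)
    _ = ∑' p : (Fin (n + 1) →₀ ℕ) × (Fin (n + 1) →₀ ℕ), (a p.1 : ℝ≥0∞) * b p.2 := by
        rw [← Finset.HasAntidiagonal.sigmaAntidiagonalEquivProd.tsum_eq, ENNReal.tsum_sigma']
        refine tsum_congr fun α => ?_
        rw [tsum_fintype]
        simp only [Finset.HasAntidiagonal.sigmaAntidiagonalEquivProd_apply]
        rw [Finset.sum_coe_sort (antidiagonal α) fun p => (a p.1 : ℝ≥0∞) * b p.2]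
    _ = weightedNorm ρ r F * weightedNorm ρ r G := by
        rw [ENNReal.tsum_prod (f := fun α β => (a α : ℝ≥0∞) * b β)]
        simp_rw [ENNReal.tsum_mul_left, ENNReal.tsum_mul_right]
        rfl

lemma weightedNorm_le_weightedNorm_one {ρ : ℝ≥0} (hρ : ρ ≤ 1) (r : ℝ≥0)
    (F : MvPowerSeries (Fin (n + 1)) ℝ) : weightedNorm ρ r F ≤ weightedNorm 1 r F := by
  refine ENNReal.tsum_le_tsum fun α => ENNReal.coe_le_coe.2 ?_
  exact mul_le_mul_right (expWeight_le_expWeight_one hρ r α) _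

lemma AbsSummableAt.weightedNorm_lt_top {r : ℝ≥0} (h : AbsSummableAt F r) :
    weightedNorm 1 r F < ⊤ := by
  have hsum : Summable fun α => ‖coeff α F‖₊ * r ^ α.degree := by
    rw [← NNReal.summable_coe]
    exact h
  refine (ENNReal.tsum_le_tsum fun α => ENNReal.coe_le_coe.2 ?_).trans_lt
    (ENNReal.tsum_coe_ne_top_iff_summable.2 hsum).lt_top
  exact mul_le_mul_right (expWeight_le_pow le_rfl r α) _

lemma absSummableAt_of_weightedNorm_lt_top {ρ r : ℝ≥0} (hρ : ρ ≤ 1)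
    (h : weightedNorm ρ r F < ⊤) : AbsSummableAt F (ρ * r / (n + 1)) := by
  have hsum : Summable fun α => ‖coeff α F‖₊ * (ρ * r / (n + 1)) ^ α.degree :=
    NNReal.summable_of_le (fun α => mul_le_mul_right (pow_le_expWeight hρ r α) _)
      (ENNReal.tsum_coe_ne_top_iff_summable.1 h.ne)
  rw [← NNReal.summable_coe] at hsum
  simpa [AbsSummableAt] using hsum

end WeightedNorm

section SmoothingOperators

open MvPowerSeries (coeff)
open Finsupp (single)
open Finset.HasAntidiagonal (mem_antidiagonal)
open scoped NNReal ENNReal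

variable {n : ℕ} {k l : ℕ} {y y' y'' z z' : MvPowerSeries (Fin (n + 1)) ℝ}

/-- `y` and `y'` have the same coefficients at all exponents of degree less than `k` in the
variable of index `0`. -/
def AgreeBelow (k : ℕ) (y y' : MvPowerSeries (Fin (n + 1)) ℝ) : Prop :=
  ∀ α : Fin (n + 1) →₀ ℕ, α 0 < k → coeff α y = coeff α y'

namespace AgreeBelow

lemma refl (k : ℕ) (y : MvPowerSeries (Fin (n + 1)) ℝ) : AgreeBelow k y y := fun _ _ => rfl

lemma zero (y y' : MvPowerSeries (Fin (n + 1)) ℝ) : AgreeBelow 0 y y' :=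
  fun _ hα => absurd hα (Nat.not_lt_zero _)

lemma mono (h : AgreeBelow k y y') (hl : l ≤ k) : AgreeBelow l y y' :=
  fun α hα => h α (hα.trans_le hl)

lemma trans (h : AgreeBelow k y y') (h' : AgreeBelow k y' y'') : AgreeBelow k y y'' :=
  fun α hα => (h α hα).trans (h' α hα)

lemma add (h : AgreeBelow k y y') (h' : AgreeBelow k z z') : AgreeBelow k (y + z) (y' + z') :=
  fun α hα => by rw [map_add, map_add, h α hα, h' α hα]

lemma mul (h : AgreeBelow k y y') (h' : AgreeBelow k z z') :
    AgreeBelow k (y * z) (y' * z') := fun α hα => by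
  classical
  rw [MvPowerSeries.coeff_mul, MvPowerSeries.coeff_mul]
  refine Finset.sum_congr rfl fun p hp => ?_
  have hp0 : p.1 0 + p.2 0 = α 0 := by rw [← mem_antidiagonal.1 hp, Finsupp.add_apply]
  rw [h p.1 (by lia), h' p.2 (by lia)]

lemma X_zero_mul (h : AgreeBelow k y y') :
    AgreeBelow (k + 1) (MvPowerSeries.X 0 * y) (MvPowerSeries.X 0 * y') := fun α hα => by
  classical
  rw [MvPowerSeries.coeff_mul, MvPowerSeries.coeff_mul]
  refine Finset.sum_congr rfl fun p hp => ?_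
  rw [MvPowerSeries.coeff_X]
  split_ifs with hp1
  · have hp0 : 1 + p.2 0 = α 0 := by
      rw [← mem_antidiagonal.1 hp, hp1, Finsupp.add_apply, Finsupp.single_eq_same]
    rw [h p.2 (by lia)]
  · rw [zero_mul, zero_mul]

lemma eq (h : ∀ k, AgreeBelow k y y') : y = y' :=
  MvPowerSeries.ext fun α => h (α 0 + 1) α (Nat.lt_succ_self _)

end AgreeBelow

variable {r : ℝ≥0} {S T : MvPowerSeries (Fin (n + 1)) ℝ → MvPowerSeries (Fin (n + 1)) ℝ}

/-- `T` maps bounded sets to bounded sets, uniformly in the weight parameter `ρ ≤ 1`, and is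
causal with respect to the variable of index `0`. -/
structure IsTame (r : ℝ≥0)
    (T : MvPowerSeries (Fin (n + 1)) ℝ → MvPowerSeries (Fin (n + 1)) ℝ) : Prop where
  exists_bound : ∀ M : ℝ≥0, ∃ C : ℝ≥0, ∀ ρ ≤ 1, ∀ y,
    weightedNorm ρ r y ≤ M → weightedNorm ρ r (T y) ≤ C
  agreeBelow : ∀ {k y y'}, AgreeBelow k y y' → AgreeBelow k (T y) (T y')

/-- `T` is bounded by a constant independent of the size of the argument, up to an error of size
`O(ρ)`, and gains one order of causality in the variable of index `0`. Such an operator is a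
contraction for the causal filtration and preserves a ball when `ρ` is small. -/
structure IsSmoothing (r : ℝ≥0)
    (T : MvPowerSeries (Fin (n + 1)) ℝ → MvPowerSeries (Fin (n + 1)) ℝ) : Prop where
  exists_bound : ∃ C₀ : ℝ≥0, ∀ M : ℝ≥0, ∃ C : ℝ≥0, ∀ ρ ≤ 1, ∀ y,
    weightedNorm ρ r y ≤ M → weightedNorm ρ r (T y) ≤ (C₀ + ρ * C : ℝ≥0)
  agreeBelow_succ : ∀ {k y y'}, AgreeBelow k y y' → AgreeBelow (k + 1) (T y) (T y')

lemma IsSmoothing.isTame (h : IsSmoothing r T) : IsTame r T where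
  exists_bound M := by
    obtain ⟨C₀, h₀⟩ := h.exists_bound
    obtain ⟨C, hC⟩ := h₀ M
    refine ⟨C₀ + C, fun ρ hρ y hy => (hC ρ hρ y hy).trans (ENNReal.coe_le_coe.2 ?_)⟩
    gcongr
    exact mul_le_of_le_one_left zero_le hρ
  agreeBelow hy := (h.agreeBelow_succ hy).mono (Nat.le_succ _)

namespace IsTame

lemma mul (hS : IsTame r S) (hT : IsTame r T) : IsTame r fun y => S y * T y where
  exists_bound M := by
    obtain ⟨C, hC⟩ := hS.exists_bound M
    obtain ⟨D, hD⟩ := hT.exists_bound M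
    refine ⟨C * D, fun ρ hρ y hy => (weightedNorm_mul_le _ _ _ _).trans ?_⟩
    rw [ENNReal.coe_mul]
    exact mul_le_mul' (hC ρ hρ y hy) (hD ρ hρ y hy)
  agreeBelow hy := (hS.agreeBelow hy).mul (hT.agreeBelow hy)

end IsTame

lemma weightedNorm_X_zero (ρ r : ℝ≥0) :
    weightedNorm ρ r (MvPowerSeries.X 0 : MvPowerSeries (Fin (n + 1)) ℝ) = (ρ * r : ℝ≥0) := by
  classical
  rw [weightedNorm, tsum_eq_single (single 0 1) fun α hα => by simp [MvPowerSeries.coeff_X, hα]]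
  simp [expWeight_single_zero]

lemma IsTame.X_zero_mul (hT : IsTame r T) : IsSmoothing r fun y => MvPowerSeries.X 0 * T y where
  exists_bound := by
    refine ⟨0, fun M => ?_⟩
    obtain ⟨C, hC⟩ := hT.exists_bound M
    refine ⟨r * C, fun ρ hρ y hy => (weightedNorm_mul_le _ _ _ _).trans ?_⟩
    rw [weightedNorm_X_zero, zero_add, ← mul_assoc, ENNReal.coe_mul (ρ * r)]
    exact mul_le_mul' le_rfl (hC ρ hρ y hy)
  agreeBelow_succ hy := (hT.agreeBelow hy).X_zero_mul

namespace IsSmoothing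

lemma const {c : MvPowerSeries (Fin (n + 1)) ℝ} (hc : weightedNorm 1 r c < ⊤) :
    IsSmoothing r fun _ => c where
  exists_bound := ⟨(weightedNorm 1 r c).toNNReal, fun _ => ⟨0, fun ρ hρ _ _ => by
    rw [mul_zero, add_zero, ENNReal.coe_toNNReal hc.ne]
    exact weightedNorm_le_weightedNorm_one hρ r c⟩⟩
  agreeBelow_succ _ := AgreeBelow.refl _ _

lemma add (hS : IsSmoothing r S) (hT : IsSmoothing r T) : IsSmoothing r fun y => S y + T y where
  exists_bound := by
    obtain ⟨C₀, hS⟩ := hS.exists_bound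
    obtain ⟨D₀, hT⟩ := hT.exists_bound
    refine ⟨C₀ + D₀, fun M => ?_⟩
    obtain ⟨C, hC⟩ := hS M
    obtain ⟨D, hD⟩ := hT M
    refine ⟨C + D, fun ρ hρ y hy => ?_⟩
    calc weightedNorm ρ r (S y + T y)
        ≤ (C₀ + ρ * C : ℝ≥0) + (D₀ + ρ * D : ℝ≥0) :=
          (weightedNorm_add_le _ _ _ _).trans (add_le_add (hC ρ hρ y hy) (hD ρ hρ y hy))
      _ = (C₀ + D₀ + ρ * (C + D) : ℝ≥0) := by
          rw [← ENNReal.coe_add]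
          congr 1
          ring
  agreeBelow_succ hy := (hS.agreeBelow_succ hy).add (hT.agreeBelow_succ hy)

lemma mul (hS : IsSmoothing r S) (hT : IsSmoothing r T) : IsSmoothing r fun y => S y * T y where
  exists_bound := by
    obtain ⟨C₀, hS⟩ := hS.exists_bound
    obtain ⟨D₀, hT⟩ := hT.exists_bound
    refine ⟨C₀ * D₀, fun M => ?_⟩
    obtain ⟨C, hC⟩ := hS M
    obtain ⟨D, hD⟩ := hT M
    refine ⟨C₀ * D + C * D₀ + C * D, fun ρ hρ y hy => ?_⟩
    calc weightedNorm ρ r (S y * T y)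
        ≤ (C₀ + ρ * C : ℝ≥0) * (D₀ + ρ * D : ℝ≥0) :=
          (weightedNorm_mul_le _ _ _ _).trans (mul_le_mul' (hC ρ hρ y hy) (hD ρ hρ y hy))
      _ = (C₀ * D₀ + ρ * (C₀ * D + C * D₀ + ρ * (C * D)) : ℝ≥0) := by
          rw [← ENNReal.coe_mul]
          congr 1
          ring
      _ ≤ (C₀ * D₀ + ρ * (C₀ * D + C * D₀ + C * D) : ℝ≥0) := by
          refine ENNReal.coe_le_coe.2 ?_
          gcongr _ + _ * (_ + ?_)
          exact mul_le_of_le_one_left zero_le hρ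
  agreeBelow_succ hy := (hS.agreeBelow_succ hy).mul (hT.agreeBelow_succ hy)

end IsSmoothing

/-- Multiplication of the coefficient at `α` by `d (α 0)`. In terms of the Euler operator
`θ = s ∂_s`, with `s` the variable of index `0`, this is `d(θ)`. -/
def diagonalOp (d : ℕ → ℝ) (y : MvPowerSeries (Fin (n + 1)) ℝ) : MvPowerSeries (Fin (n + 1)) ℝ :=
  fun α => d (α 0) * coeff α y

lemma coeff_diagonalOp (d : ℕ → ℝ) (y : MvPowerSeries (Fin (n + 1)) ℝ) (α : Fin (n + 1) →₀ ℕ) :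
    coeff α (diagonalOp d y) = d (α 0) * coeff α y := rfl

lemma weightedNorm_diagonalOp_le {d : ℕ → ℝ} {K : ℝ≥0} (hd : ∀ k, ‖d k‖₊ ≤ K) (ρ r : ℝ≥0)
    (y : MvPowerSeries (Fin (n + 1)) ℝ) :
    weightedNorm ρ r (diagonalOp d y) ≤ K * weightedNorm ρ r y := by
  rw [weightedNorm, weightedNorm, ← ENNReal.tsum_mul_left]
  refine ENNReal.tsum_le_tsum fun α => ?_
  rw [← ENNReal.coe_mul, ENNReal.coe_le_coe, coeff_diagonalOp, nnnorm_mul, mul_assoc]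
  gcongr
  exact hd _

lemma IsTame.diagonalOp {d : ℕ → ℝ} {K : ℝ≥0} (hd : ∀ k, ‖d k‖₊ ≤ K) :
    IsTame (n := n) r (diagonalOp d) where
  exists_bound M := ⟨K * M, fun ρ _ y hy => (weightedNorm_diagonalOp_le hd ρ r y).trans (by
    rw [ENNReal.coe_mul]
    gcongr)⟩
  agreeBelow hy α hα := by rw [coeff_diagonalOp, coeff_diagonalOp, hy α hα]

/-- Integration from `0` in the variable of index `0`, followed by `∂_j` for some `j ≠ 0`. -/
noncomputable def integratePderiv (j : Fin (n + 1)) (y : MvPowerSeries (Fin (n + 1)) ℝ) :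
    MvPowerSeries (Fin (n + 1)) ℝ := fun α =>
  if α 0 = 0 then 0 else coeff (α - single 0 1 + single j 1) y * (α j + 1) / α 0

lemma coeff_integratePderiv_of_eq_zero (j : Fin (n + 1)) (y : MvPowerSeries (Fin (n + 1)) ℝ)
    {α : Fin (n + 1) →₀ ℕ} (h : α 0 = 0) : coeff α (integratePderiv j y) = 0 :=
  if_pos h

lemma coeff_integratePderiv_add_single {j : Fin (n + 1)} (hj : j ≠ 0)
    (y : MvPowerSeries (Fin (n + 1)) ℝ) (β : Fin (n + 1) →₀ ℕ) :
    coeff (β + single 0 1) (integratePderiv j y) =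
      coeff (β + single j 1) y * (β j + 1) / (β 0 + 1) := by
  refine (if_neg (by simp)).trans ?_
  simp [Finsupp.single_eq_of_ne hj]

lemma weightedNorm_integratePderiv_le {j : Fin (n + 1)} (hj : j ≠ 0) (ρ r : ℝ≥0)
    (y : MvPowerSeries (Fin (n + 1)) ℝ) :
    weightedNorm ρ r (integratePderiv j y) ≤ ρ * weightedNorm ρ r y := by
  set a : (Fin (n + 1) →₀ ℕ) → ℝ≥0 := fun α => ‖coeff α y‖₊ * expWeight ρ r α
  have hterm (β : Fin (n + 1) →₀ ℕ) :
      ‖coeff (β + single 0 1) (integratePderiv j y)‖₊ * expWeight ρ r (β + single 0 1) =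
        ρ * a (β + single j 1) := by
    have hnorm : ‖coeff (β + single 0 1) (integratePderiv j y)‖₊ =
        ‖coeff (β + single j 1) y‖₊ * (β j + 1) / (β 0 + 1) := by
      rw [coeff_integratePderiv_add_single hj, nnnorm_div, nnnorm_mul, ← Nat.cast_add_one,
        ← Nat.cast_add_one, Real.nnnorm_natCast, Real.nnnorm_natCast]
      push_cast
      rfl
    rw [hnorm, div_mul_eq_mul_div, mul_assoc, succ_mul_expWeight_add_single_zero ρ r β hj,
      div_eq_iff (by positivity)]
    ring
  rw [weightedNorm, ← (add_left_injective (single (0 : Fin (n + 1)) 1)).tsum_eq]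
  · calc _ = ρ * ∑' β, (a (β + single j 1) : ℝ≥0∞) := by
          rw [← ENNReal.tsum_mul_left]
          exact tsum_congr fun β => by rw [hterm, ENNReal.coe_mul]
      _ ≤ ρ * weightedNorm ρ r y :=
          mul_le_mul_right (ENNReal.tsum_comp_le_tsum_of_injective
            (add_left_injective (single j 1)) fun α => (a α : ℝ≥0∞)) _
  · intro α hα
    have h0 : α 0 ≠ 0 := fun h0 => hα (by simp [coeff_integratePderiv_of_eq_zero j y h0])
    obtain ⟨β, rfl⟩ := exists_eq_add_single h0
    exact ⟨β, rfl⟩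

lemma IsTame.integratePderiv (hT : IsTame r T) {j : Fin (n + 1)} (hj : j ≠ 0) :
    IsSmoothing r fun y => integratePderiv j (T y) where
  exists_bound := by
    refine ⟨0, fun M => ?_⟩
    obtain ⟨C, hC⟩ := hT.exists_bound M
    refine ⟨C, fun ρ hρ y hy => (weightedNorm_integratePderiv_le hj _ _ _).trans ?_⟩
    rw [zero_add, ENNReal.coe_mul]
    exact mul_le_mul' le_rfl (hC ρ hρ y hy)
  agreeBelow_succ hy α hα := by
    by_cases h0 : α 0 = 0
    · rw [coeff_integratePderiv_of_eq_zero _ _ h0, coeff_integratePderiv_of_eq_zero _ _ h0]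
    · obtain ⟨β, rfl⟩ := exists_eq_add_single h0
      rw [coeff_integratePderiv_add_single hj, coeff_integratePderiv_add_single hj,
        hT.agreeBelow hy]
      simpa [Finsupp.single_eq_of_ne hj.symm] using hα

lemma exists_agreeBelow_of_agreeBelow_succ {u : ℕ → MvPowerSeries (Fin (n + 1)) ℝ}
    (hu : ∀ k, AgreeBelow k (u k) (u (k + 1))) : ∃ y, ∀ k, AgreeBelow k y (u k) := by
  have hmono {k m} (hkm : k ≤ m) : AgreeBelow k (u k) (u m) := by
    induction m, hkm using Nat.le_induction with
    | base => exact AgreeBelow.refl _ _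
    | succ m hm ih => exact ih.trans ((hu m).mono hm)
  let y : MvPowerSeries (Fin (n + 1)) ℝ := fun α => coeff α (u (α 0 + 1))
  exact ⟨y, fun k α hα => hmono hα α (Nat.lt_succ_self _)⟩

lemma weightedNorm_le_of_agreeBelow {u : ℕ → MvPowerSeries (Fin (n + 1)) ℝ} {ρ : ℝ≥0} {M : ℝ≥0∞}
    (hy : ∀ k, AgreeBelow k y (u k)) (hu : ∀ k, weightedNorm ρ r (u k) ≤ M) :
    weightedNorm ρ r y ≤ M := by
  rw [weightedNorm, ENNReal.tsum_eq_iSup_sum]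
  refine iSup_le fun s => ?_
  let k := s.sup (fun α => α 0) + 1
  have hk : ∀ α ∈ s, α 0 < k := fun α hα =>
    Nat.lt_succ_of_le (Finset.le_sup (f := fun α : Fin (n + 1) →₀ ℕ => α 0) hα)
  calc _ = ∑ α ∈ s, ((‖coeff α (u k)‖₊ * expWeight ρ r α : ℝ≥0) : ℝ≥0∞) :=
        Finset.sum_congr rfl fun α hα => by rw [hy k α (hk α hα)]
    _ ≤ weightedNorm ρ r (u k) := ENNReal.sum_le_tsum s
    _ ≤ M := hu k

namespace IsSmoothing

lemma exists_maps_ball (hT : IsSmoothing r T) : ∃ M : ℝ≥0, ∃ ρ : ℝ≥0, 0 < ρ ∧ ρ ≤ 1 ∧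
    ∀ y, weightedNorm ρ r y ≤ M → weightedNorm ρ r (T y) ≤ M := by
  obtain ⟨C₀, h⟩ := hT.exists_bound
  obtain ⟨C, hC⟩ := h (C₀ + 1)
  have hρC : min 1 (1 / (C + 1)) * C ≤ 1 := by
    calc min 1 (1 / (C + 1)) * C ≤ 1 / (C + 1) * (C + 1) := by
          gcongr
          · exact min_le_right _ _
          · exact le_self_add
      _ = 1 := by field_simp
  refine ⟨C₀ + 1, min 1 (1 / (C + 1)), by positivity, min_le_left _ _, fun y hy => ?_⟩
  refine (hC _ (min_le_left _ _) y hy).trans (ENNReal.coe_le_coe.2 ?_)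
  gcongr

theorem exists_fixedPoint (hT : IsSmoothing r T) :
    ∃ y, T y = y ∧ ∃ ρ : ℝ≥0, 0 < ρ ∧ ρ ≤ 1 ∧ weightedNorm ρ r y < ⊤ := by
  let u : ℕ → MvPowerSeries (Fin (n + 1)) ℝ := fun k => T^[k] 0
  have u_succ (k) : u (k + 1) = T (u k) := Function.iterate_succ_apply' T k 0
  have hu (k) : AgreeBelow k (u k) (u (k + 1)) := by
    induction k with
    | zero => exact AgreeBelow.zero _ _
    | succ k ih => rw [u_succ, u_succ (k + 1)]; exact hT.agreeBelow_succ ih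
  obtain ⟨y, hy⟩ := exists_agreeBelow_of_agreeBelow_succ hu
  refine ⟨y, AgreeBelow.eq fun k α hα => ?_, ?_⟩
  · rw [hT.agreeBelow_succ (hy k) α (hα.trans (Nat.lt_succ_self k)), ← u_succ,
      hy (k + 1) α (hα.trans (Nat.lt_succ_self k))]
  · obtain ⟨M, ρ, hρ, hρ1, hM⟩ := hT.exists_maps_ball
    refine ⟨ρ, hρ, hρ1, (weightedNorm_le_of_agreeBelow hy fun k => ?_).trans_lt
      (ENNReal.coe_lt_top (r := M))⟩
    induction k with
    | zero => simp [u, weightedNorm]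
    | succ k ih => rw [u_succ]; exact hM _ ih

theorem fixedPoint_unique (hT : IsSmoothing r T) (hy : T y = y) (hy' : T y' = y') : y = y' := by
  refine AgreeBelow.eq fun k => ?_
  induction k with
  | zero => exact AgreeBelow.zero _ _
  | succ k ih => simpa only [hy, hy'] using hT.agreeBelow_succ ih

end IsSmoothing

end SmoothingOperators

section FuchsianOperators

open MvPowerSeries (coeff pderiv)
open Finsupp (single)

variable {n : ℕ}

lemma coeff_X_zero_mul_of_eq_zero (F : MvPowerSeries (Fin (n + 1)) ℝ) {α : Fin (n + 1) →₀ ℕ}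
    (h : α 0 = 0) : coeff α (MvPowerSeries.X 0 * F) = 0 := by
  simpa using (AgreeBelow.zero F 0).X_zero_mul α (by lia)

lemma coeff_X_zero_mul_add_single (F : MvPowerSeries (Fin (n + 1)) ℝ) (β : Fin (n + 1) →₀ ℕ) :
    coeff (β + single 0 1) (MvPowerSeries.X 0 * F) = coeff β F := by
  rw [MvPowerSeries.X, add_comm β, MvPowerSeries.coeff_add_monomial_mul, one_mul]

lemma pderiv_X_zero_mul {j : Fin (n + 1)} (hj : j ≠ 0) (F : MvPowerSeries (Fin (n + 1)) ℝ) :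
    pderiv ℝ j (MvPowerSeries.X 0 * F) = MvPowerSeries.X 0 * pderiv ℝ j F := by
  rw [Derivation.leibniz, MvPowerSeries.pderiv_X_of_ne hj.symm, smul_zero, add_zero, smul_eq_mul]

lemma diagonalOp_diagonalOp (d e : ℕ → ℝ) (y : MvPowerSeries (Fin (n + 1)) ℝ) :
    diagonalOp d (diagonalOp e y) = diagonalOp (fun k => d k * e k) y := by
  ext α
  simp only [coeff_diagonalOp, mul_assoc]

lemma diagonalOp_integratePderiv {j : Fin (n + 1)} (hj : j ≠ 0) (d : ℕ → ℝ)
    (y : MvPowerSeries (Fin (n + 1)) ℝ) :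
    diagonalOp d (integratePderiv j y) = integratePderiv j (diagonalOp (fun k => d (k + 1)) y) := by
  ext α
  rw [coeff_diagonalOp]
  by_cases h : α 0 = 0
  · rw [coeff_integratePderiv_of_eq_zero _ _ h, coeff_integratePderiv_of_eq_zero _ _ h, mul_zero]
  · obtain ⟨β, rfl⟩ := exists_eq_add_single h
    rw [coeff_integratePderiv_add_single hj, coeff_integratePderiv_add_single hj, coeff_diagonalOp,
      Finsupp.add_apply, Finsupp.add_apply, Finsupp.single_eq_same,
      Finsupp.single_eq_of_ne hj.symm, add_zero]
    ring

lemma X_zero_mul_pderiv {j : Fin (n + 1)} (hj : j ≠ 0) (F : MvPowerSeries (Fin (n + 1)) ℝ) :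
    MvPowerSeries.X 0 * pderiv ℝ j F = integratePderiv j (diagonalOp (fun k => k + 1) F) := by
  ext α
  by_cases h : α 0 = 0
  · rw [coeff_X_zero_mul_of_eq_zero _ h, coeff_integratePderiv_of_eq_zero _ _ h]
  · obtain ⟨β, rfl⟩ := exists_eq_add_single h
    rw [coeff_X_zero_mul_add_single, coeff_integratePderiv_add_single hj, coeff_diagonalOp,
      MvPowerSeries.coeff_pderiv, Finsupp.add_apply, Finsupp.single_eq_of_ne hj.symm, add_zero]
    field_simp

lemma X_zero_mul_pderiv_zero (F : MvPowerSeries (Fin (n + 1)) ℝ) :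
    MvPowerSeries.X 0 * pderiv ℝ 0 F = diagonalOp (fun k => k) F := by
  ext α
  rw [coeff_diagonalOp]
  by_cases h : α 0 = 0
  · rw [coeff_X_zero_mul_of_eq_zero _ h, h, Nat.cast_zero, zero_mul]
  · obtain ⟨β, rfl⟩ := exists_eq_add_single h
    simp [coeff_X_zero_mul_add_single, MvPowerSeries.coeff_pderiv, mul_comm]

lemma pderiv_zero_X_zero_mul_diagonalOp (d : ℕ → ℝ) (y : MvPowerSeries (Fin (n + 1)) ℝ) :
    pderiv ℝ 0 (MvPowerSeries.X 0 * diagonalOp d y) = diagonalOp (fun k => (k + 1) * d k) y := by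
  ext β
  rw [MvPowerSeries.coeff_pderiv, coeff_X_zero_mul_add_single, coeff_diagonalOp, coeff_diagonalOp]
  ring

/-- The Fuchsian operator `s ∂_s² + b ∂_s`, with `s` the variable of index `0`. -/
noncomputable def fuchsOp (b : ℝ) (W : MvPowerSeries (Fin (n + 1)) ℝ) :
    MvPowerSeries (Fin (n + 1)) ℝ :=
  MvPowerSeries.X 0 * pderiv ℝ 0 (pderiv ℝ 0 W) + MvPowerSeries.C b * pderiv ℝ 0 W

/-- The right inverse of `fuchsOp b` whose values vanish on `s = 0`; it divides the coefficient of
`s ^ k` by `(k + 1) (k + b)` and multiplies by `s`. -/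
noncomputable def fuchsInv (b : ℝ) (y : MvPowerSeries (Fin (n + 1)) ℝ) :
    MvPowerSeries (Fin (n + 1)) ℝ :=
  MvPowerSeries.X 0 * diagonalOp (fun k => 1 / ((k + 1) * (k + b))) y

/-- The power series obtained by setting the variable of index `0` to `0`. -/
noncomputable def sliceZero (F : MvPowerSeries (Fin (n + 1)) ℝ) : MvPowerSeries (Fin (n + 1)) ℝ :=
  diagonalOp (fun k => if k = 0 then 1 else 0) F

lemma coeff_sliceZero (F : MvPowerSeries (Fin (n + 1)) ℝ) (α : Fin (n + 1) →₀ ℕ) :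
    coeff α (sliceZero F) = if α 0 = 0 then coeff α F else 0 := by
  rw [sliceZero, coeff_diagonalOp, ite_mul, one_mul, zero_mul]

lemma pderiv_zero_sliceZero (F : MvPowerSeries (Fin (n + 1)) ℝ) : pderiv ℝ 0 (sliceZero F) = 0 := by
  ext β
  simp [MvPowerSeries.coeff_pderiv, coeff_sliceZero]

lemma sliceZero_sliceZero_add_X_zero_mul (F G : MvPowerSeries (Fin (n + 1)) ℝ) :
    sliceZero (sliceZero F + MvPowerSeries.X 0 * G) = sliceZero F := by
  ext α
  simp +contextual [coeff_sliceZero, coeff_X_zero_mul_of_eq_zero]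

lemma exists_eq_X_zero_mul_of_sliceZero_eq_zero {F : MvPowerSeries (Fin (n + 1)) ℝ}
    (h : sliceZero F = 0) : ∃ G, F = MvPowerSeries.X 0 * G := by
  let G : MvPowerSeries (Fin (n + 1)) ℝ := fun β => coeff (β + single 0 1) F
  refine ⟨G, MvPowerSeries.ext fun α => ?_⟩
  by_cases hα : α 0 = 0
  · have hcoeff := coeff_sliceZero F α
    rw [h, map_zero, if_pos hα] at hcoeff
    rw [coeff_X_zero_mul_of_eq_zero _ hα, ← hcoeff]
  · obtain ⟨β, rfl⟩ := exists_eq_add_single hα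
    rw [coeff_X_zero_mul_add_single]
    rfl

section

variable {b : ℝ}

lemma coeff_fuchsOp (b : ℝ) (W : MvPowerSeries (Fin (n + 1)) ℝ) (α : Fin (n + 1) →₀ ℕ) :
    coeff α (fuchsOp b W) = (α 0 + b) * coeff α (pderiv ℝ 0 W) := by
  rw [fuchsOp, X_zero_mul_pderiv_zero, map_add, coeff_diagonalOp,
    MvPowerSeries.coeff_C_mul, add_mul]

lemma pderiv_zero_fuchsInv (b : ℝ) (y : MvPowerSeries (Fin (n + 1)) ℝ) :
    pderiv ℝ 0 (fuchsInv b y) = diagonalOp (fun k => 1 / (k + b)) y := by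
  rw [fuchsInv, pderiv_zero_X_zero_mul_diagonalOp]
  congr 1
  ext k
  rw [mul_one_div, ← div_div, div_self k.cast_add_one_ne_zero]

lemma fuchsOp_add_fuchsInv (hb : 0 < b) {W₀ : MvPowerSeries (Fin (n + 1)) ℝ}
    (hW₀ : pderiv ℝ 0 W₀ = 0) (y : MvPowerSeries (Fin (n + 1)) ℝ) :
    fuchsOp b (W₀ + fuchsInv b y) = y := by
  ext α
  rw [coeff_fuchsOp, map_add, hW₀, zero_add, pderiv_zero_fuchsInv, coeff_diagonalOp, ← mul_assoc,
    mul_one_div_cancel (by positivity), one_mul]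

lemma sliceZero_add_fuchsInv_fuchsOp (hb : 0 < b) (W : MvPowerSeries (Fin (n + 1)) ℝ) :
    sliceZero W + fuchsInv b (fuchsOp b W) = W := by
  ext α
  rw [map_add, coeff_sliceZero, fuchsInv]
  by_cases h : α 0 = 0
  · rw [if_pos h, coeff_X_zero_mul_of_eq_zero _ h, add_zero]
  · obtain ⟨β, rfl⟩ := exists_eq_add_single h
    rw [if_neg h, coeff_X_zero_mul_add_single, coeff_diagonalOp, coeff_fuchsOp,
      MvPowerSeries.coeff_pderiv]
    field_simp
    ring

lemma pderiv_fuchsInv {j : Fin (n + 1)} (hj : j ≠ 0) (b : ℝ) (y : MvPowerSeries (Fin (n + 1)) ℝ) :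
    pderiv ℝ j (fuchsInv b y) = integratePderiv j (diagonalOp (fun k => 1 / (k + b)) y) := by
  rw [← pderiv_zero_fuchsInv, fuchsInv, pderiv_X_zero_mul hj, X_zero_mul_pderiv hj,
    diagonalOp_diagonalOp, pderiv_zero_X_zero_mul_diagonalOp]

lemma X_zero_mul_pderiv_pderiv_zero_fuchsInv {j : Fin (n + 1)} (hj : j ≠ 0) (b : ℝ)
    (y : MvPowerSeries (Fin (n + 1)) ℝ) :
    MvPowerSeries.X 0 * pderiv ℝ j (pderiv ℝ 0 (fuchsInv b y)) =
      integratePderiv j (diagonalOp (fun k => (k + 1) * (1 / (k + b))) y) := by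
  rw [pderiv_zero_fuchsInv, X_zero_mul_pderiv hj, diagonalOp_diagonalOp]

lemma X_zero_mul_pderiv_pderiv_fuchsInv {i j : Fin (n + 1)} (hi : i ≠ 0) (hj : j ≠ 0) (b : ℝ)
    (y : MvPowerSeries (Fin (n + 1)) ℝ) :
    MvPowerSeries.X 0 * pderiv ℝ i (pderiv ℝ j (fuchsInv b y)) =
      integratePderiv i (integratePderiv j
        (diagonalOp (fun k => (k + 2) * (1 / (k + b))) y)) := by
  rw [pderiv_fuchsInv hj, X_zero_mul_pderiv hi, diagonalOp_integratePderiv hj,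
    diagonalOp_diagonalOp]
  congr! 4
  push_cast
  ring

lemma exists_nnnorm_div_le (hb : 0 < b) (m c : ℝ) :
    ∃ K : NNReal, ∀ k : ℕ, ‖(m * k + c) * (1 / (k + b))‖₊ ≤ K := by
  refine ⟨‖m‖₊ + ‖c / b‖₊, fun k => NNReal.coe_le_coe.1 ?_⟩
  rw [NNReal.coe_add, coe_nnnorm, coe_nnnorm, coe_nnnorm, mul_one_div, norm_div, norm_div,
    Real.norm_of_nonneg (by positivity : 0 ≤ k + b), Real.norm_of_nonneg hb.le,
    div_le_iff₀ (by positivity)]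
  calc ‖m * k + c‖ ≤ ‖m‖ * k + ‖c‖ := by simpa using norm_add_le (m * k) c
    _ ≤ ‖m‖ * k + ‖c‖ + (‖m‖ * b + ‖c‖ / b * k) := le_add_of_nonneg_right (by positivity)
    _ = (‖m‖ + ‖c‖ / b) * (k + b) := by field_simp; ring

end

end FuchsianOperators

section SliceAndDivision

open Finsupp (single)

variable {n : ℕ} {F : MvPowerSeries (Fin (n + 1)) ℝ} {f : (Fin (n + 1) → ℝ) → ℝ}

lemma monomialValue_update_zero (p : Fin (n + 1) → ℝ) (α : Fin (n + 1) →₀ ℕ) :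
    monomialValue (Function.update p 0 0) α = if α 0 = 0 then monomialValue p α else 0 := by
  rw [monomialValue, monomialValue, Fin.prod_univ_succ, Fin.prod_univ_succ]
  split_ifs with h <;> simp [h]

lemma HasExpansion.sliceZero (h : HasExpansion F f) :
    HasExpansion (sliceZero F) fun p => f (Function.update p 0 0) := by
  obtain ⟨r, hr, h⟩ := h
  refine ⟨r, hr, ?_, fun p hp => ?_⟩
  · refine Summable.of_nonneg_of_le (fun α => by positivity) (fun α => ?_) h.1
    rw [coeff_sliceZero]
    gcongr ?_ * _
    split_ifs
    · rfl
    · simp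
  · convert h.2 _ (norm_update_lt hp 0 (by rwa [norm_zero])) using 2 with α
    rw [coeff_sliceZero, monomialValue_update_zero]
    split_ifs <;> simp

lemma AbsSummableAt.of_X_zero_mul {G : MvPowerSeries (Fin (n + 1)) ℝ} {r : ℝ} (hr : 0 < r)
    (h : AbsSummableAt (MvPowerSeries.X 0 * G) r) : AbsSummableAt G r := by
  have hshift := (h.comp_injective (add_left_injective (single 0 1))).mul_right r⁻¹
  refine hshift.congr fun β => ?_
  simp only [Function.comp_apply, coeff_X_zero_mul_add_single, map_add, Finsupp.degree_single,
    pow_succ]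
  field_simp

lemma exists_eventuallyEq_coord_zero_mul (hf : AnalyticAt ℝ f 0)
    (h : ∀ᶠ p in nhds 0, f (Function.update p 0 0) = 0) :
    ∃ g, AnalyticAt ℝ g 0 ∧ f =ᶠ[nhds 0] fun p => p 0 * g p := by
  obtain ⟨F, hF⟩ := HasExpansion.of_analyticAt hf
  obtain ⟨G, rfl⟩ := exists_eq_X_zero_mul_of_sliceZero_eq_zero (hF.sliceZero.eq_zero h)
  obtain ⟨r, hr, hG⟩ := id hF
  obtain ⟨g, hg⟩ := (hG.1.of_X_zero_mul hr).exists_hasSumOnBall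
  have hGg : HasExpansion G g := ⟨r, hr, hg⟩
  exact ⟨g, hGg.analyticAt, hF.eventuallyEq ((HasExpansion.X 0).mul hGg)⟩

lemma eventuallyEq_zero_of_pos_coord_zero (hf : AnalyticAt ℝ f 0)
    (h : ∀ᶠ p in nhds 0, 0 < p 0 → f p = 0) : f =ᶠ[nhds 0] 0 := by
  obtain ⟨r, hr, hball⟩ := Metric.eventually_nhds_iff_ball.1 (hf.eventually_analyticAt.and h)
  let q : Fin (n + 1) → ℝ := Pi.single 0 (r / 2)
  have hq : q ∈ Metric.ball (0 : Fin (n + 1) → ℝ) r := by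
    rw [mem_ball_zero_iff, Pi.norm_single, Real.norm_of_nonneg (by positivity)]
    exact half_lt_self hr
  have hpos : ∀ᶠ p in nhds q, 0 < p 0 :=
    (continuous_apply (0 : Fin (n + 1))).continuousAt.eventually
      (lt_mem_nhds (by simpa [q] using hr))
  have hfq : f =ᶠ[nhds q] 0 := by
    filter_upwards [hpos, Metric.isOpen_ball.mem_nhds hq] with p hp hpr using (hball p hpr).2 hp
  have hzero := AnalyticOnNhd.eqOn_zero_of_preconnected_of_eventuallyEq_zero
    (fun p hp => (hball p hp).1) (convex_ball 0 r).isPreconnected hq hfq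
  exact Filter.eventuallyEq_of_mem (Metric.ball_mem_nhds 0 hr) hzero

end SliceAndDivision

section FuchsianCauchyProblem

open MvPowerSeries (pderiv)
open scoped NNReal ENNReal

variable {n : ℕ} {b : ℝ} {E E' : ((Fin (n + 1) → ℝ) → ℝ) → (Fin (n + 1) → ℝ) → ℝ}
  {P Q R : ℝ≥0 → (MvPowerSeries (Fin (n + 1)) ℝ → MvPowerSeries (Fin (n + 1)) ℝ) → Prop}

/-- The operator `E` on functions is induced by an operator `T` on power series and, for every
Cauchy datum `W₀` on `s = 0`, the conjugate `y ↦ T (W₀ + fuchsInv b y)` of `T` has property `P r`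
for all small `r > 0`. -/
def LiftsTo (b : ℝ)
    (P : ℝ≥0 → (MvPowerSeries (Fin (n + 1)) ℝ → MvPowerSeries (Fin (n + 1)) ℝ) → Prop)
    (E : ((Fin (n + 1) → ℝ) → ℝ) → (Fin (n + 1) → ℝ) → ℝ) : Prop :=
  ∃ T : MvPowerSeries (Fin (n + 1)) ℝ → MvPowerSeries (Fin (n + 1)) ℝ,
    (∀ {W w}, HasExpansion W w → HasExpansion (T W) (E w)) ∧
    ∀ {W₀ w₀}, HasExpansion W₀ w₀ → pderiv ℝ 0 W₀ = 0 →
      ∀ᶠ r in nhdsWithin 0 (Set.Ioi 0), P r fun y => T (W₀ + fuchsInv b y)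

namespace LiftsTo

lemma map₂ (hE : LiftsTo b P E) (hE' : LiftsTo b Q E') {φ : ℝ → ℝ → ℝ}
    {Φ : MvPowerSeries (Fin (n + 1)) ℝ → MvPowerSeries (Fin (n + 1)) ℝ →
      MvPowerSeries (Fin (n + 1)) ℝ}
    (hφ : ∀ {F G f g}, HasExpansion F f → HasExpansion G g →
      HasExpansion (Φ F G) fun p => φ (f p) (g p))
    (hΦ : ∀ {r S T}, P r S → Q r T → R r fun y => Φ (S y) (T y)) :
    LiftsTo b R fun w p => φ (E w p) (E' w p) := by
  obtain ⟨S, hS, hP⟩ := hE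
  obtain ⟨T, hT, hQ⟩ := hE'
  refine ⟨fun W => Φ (S W) (T W), fun hW => hφ (hS hW) (hT hW), fun hW₀ hs => ?_⟩
  filter_upwards [hP hW₀ hs, hQ hW₀ hs] with r hr hr' using hΦ hr hr'

end LiftsTo

/-- `E` is a nonlinear operator acting boundedly on solutions of the Fuchsian equation. -/
abbrev IsTameOperator (b : ℝ) (E : ((Fin (n + 1) → ℝ) → ℝ) → (Fin (n + 1) → ℝ) → ℝ) : Prop :=
  LiftsTo b IsTame E

/-- `E` is a nonlinear operator of lower order than `s ∂_s² + b ∂_s`, so that it may serve as the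
right-hand side of a Fuchsian equation. -/
abbrev IsSmoothingOperator (b : ℝ) (E : ((Fin (n + 1) → ℝ) → ℝ) → (Fin (n + 1) → ℝ) → ℝ) :
    Prop :=
  LiftsTo b IsSmoothing E

lemma HasExpansion.eventually_weightedNorm_lt_top {F : MvPowerSeries (Fin (n + 1)) ℝ}
    {f : (Fin (n + 1) → ℝ) → ℝ} (h : HasExpansion F f) :
    ∀ᶠ r in nhdsWithin (0 : ℝ≥0) (Set.Ioi 0), weightedNorm 1 r F < ⊤ := by
  obtain ⟨R, hR, h⟩ := h
  have hmem : Set.Iio R.toNNReal ∈ nhds (0 : ℝ≥0) := Iio_mem_nhds (by simpa using hR)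
  filter_upwards [mem_nhdsWithin_of_mem_nhds hmem] with r hr
  exact (h.1.mono r.2 (Real.lt_toNNReal_iff_coe_lt.1 hr).le).weightedNorm_lt_top

namespace IsTameOperator

lemma mul (hE : IsTameOperator b E) (hE' : IsTameOperator b E') :
    IsTameOperator b fun w p => E w p * E' w p :=
  hE.map₂ hE' HasExpansion.mul IsTame.mul

lemma coord_zero_mul (hE : IsTameOperator b E) :
    IsSmoothingOperator b fun w p => p 0 * E w p := by
  obtain ⟨T, hT, hP⟩ := hE
  refine ⟨fun W => MvPowerSeries.X 0 * T W, fun hW => (HasExpansion.X 0).mul (hT hW),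
    fun hW₀ hs => ?_⟩
  filter_upwards [hP hW₀ hs] with r hr using hr.X_zero_mul

lemma partialDeriv_zero (hb : 0 < b) : IsTameOperator (n := n) b (partialDeriv 0) := by
  refine ⟨pderiv ℝ 0, fun hW => hW.pderiv 0, fun _ hs => Eventually.of_forall fun r => ?_⟩
  simp only [map_add, hs, zero_add, pderiv_zero_fuchsInv]
  obtain ⟨K, hK⟩ := exists_nnnorm_div_le hb 0 1
  exact IsTame.diagonalOp (by simpa using hK)

end IsTameOperator

namespace IsSmoothingOperator

lemma add (hE : IsSmoothingOperator b E) (hE' : IsSmoothingOperator b E') :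
    IsSmoothingOperator b fun w p => E w p + E' w p :=
  hE.map₂ hE' HasExpansion.add IsSmoothing.add

lemma mul (hE : IsSmoothingOperator b E) (hE' : IsSmoothingOperator b E') :
    IsSmoothingOperator b fun w p => E w p * E' w p :=
  hE.map₂ hE' HasExpansion.mul IsSmoothing.mul

lemma of_analyticAt {c : (Fin (n + 1) → ℝ) → ℝ} (hc : AnalyticAt ℝ c 0) :
    IsSmoothingOperator b fun _ p => c p := by
  obtain ⟨C, hC⟩ := HasExpansion.of_analyticAt hc
  refine ⟨fun _ => C, fun _ => hC, fun _ _ => ?_⟩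
  filter_upwards [hC.eventually_weightedNorm_lt_top] with r hr using IsSmoothing.const hr

lemma analyticAt_mul {c : (Fin (n + 1) → ℝ) → ℝ} (hc : AnalyticAt ℝ c 0)
    (hE : IsSmoothingOperator b E) : IsSmoothingOperator b fun w p => c p * E w p :=
  (of_analyticAt hc).mul hE

lemma sub (hE : IsSmoothingOperator b E) (hE' : IsSmoothingOperator b E') :
    IsSmoothingOperator b fun w p => E w p - E' w p := by
  simpa only [neg_one_mul, ← sub_eq_add_neg] using
    hE.add (hE'.analyticAt_mul (analyticAt_const (v := -1)))

lemma sum {ι : Type*} (s : Finset ι)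
    {E : ι → ((Fin (n + 1) → ℝ) → ℝ) → (Fin (n + 1) → ℝ) → ℝ}
    (h : ∀ i, IsSmoothingOperator b (E i)) :
    IsSmoothingOperator b fun w p => ∑ i ∈ s, E i w p := by
  classical
  induction s using Finset.induction_on with
  | empty => simpa only [Finset.sum_empty] using of_analyticAt (b := b) (analyticAt_const (v := 0))
  | insert i s hi ih =>
    simp only [Finset.sum_insert hi]
    exact (h i).add ih

lemma of_additive {T : MvPowerSeries (Fin (n + 1)) ℝ → MvPowerSeries (Fin (n + 1)) ℝ}
    (hadd : ∀ V W, T (V + W) = T V + T W)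
    (hT : ∀ {W w}, HasExpansion W w → HasExpansion (T W) (E w))
    (hS : ∀ r, IsSmoothing r fun y => T (fuchsInv b y)) : IsSmoothingOperator b E := by
  refine ⟨T, hT, fun hW₀ _ => ?_⟩
  filter_upwards [(hT hW₀).eventually_weightedNorm_lt_top] with r hr
  simpa only [hadd] using (IsSmoothing.const hr).add (hS r)

variable {i j : Fin (n + 1)}

lemma partialDeriv (hb : 0 < b) (hj : j ≠ 0) : IsSmoothingOperator b (partialDeriv j) := by
  obtain ⟨K, hK⟩ := exists_nnnorm_div_le hb 0 1
  refine of_additive (map_add _) (fun hW => hW.pderiv j) fun r => ?_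
  simp only [pderiv_fuchsInv hj]
  exact (IsTame.diagonalOp (by simpa using hK)).integratePderiv hj

lemma coord_zero_mul_partialDeriv_partialDeriv_zero (hb : 0 < b) (hj : j ≠ 0) :
    IsSmoothingOperator b fun w p => p 0 * _root_.partialDeriv j (_root_.partialDeriv 0 w) p := by
  obtain ⟨K, hK⟩ := exists_nnnorm_div_le hb 1 1
  refine of_additive (fun V W => by rw [map_add, map_add, mul_add])
    (fun hW => (HasExpansion.X 0).mul ((hW.pderiv 0).pderiv j)) fun r => ?_
  simp only [X_zero_mul_pderiv_pderiv_zero_fuchsInv hj]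
  exact (IsTame.diagonalOp (by simpa using hK)).integratePderiv hj

lemma coord_zero_mul_partialDeriv_partialDeriv (hb : 0 < b) (hi : i ≠ 0) (hj : j ≠ 0) :
    IsSmoothingOperator b fun w p => p 0 * _root_.partialDeriv i (_root_.partialDeriv j w) p := by
  obtain ⟨K, hK⟩ := exists_nnnorm_div_le hb 1 2
  refine of_additive (fun V W => by rw [map_add, map_add, mul_add])
    (fun hW => (HasExpansion.X 0).mul ((hW.pderiv j).pderiv i)) fun r => ?_
  simp only [X_zero_mul_pderiv_pderiv_fuchsInv hi hj]
  exact ((IsTame.diagonalOp (by simpa using hK)).integratePderiv hj).isTame.integratePderiv hi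

end IsSmoothingOperator

/-- The Fuchsian equation `s ∂_s² w + b ∂_s w = E w` at the point `p`, with `s = p 0`. -/
def FuchsEq (b : ℝ) (E : ((Fin (n + 1) → ℝ) → ℝ) → (Fin (n + 1) → ℝ) → ℝ)
    (w : (Fin (n + 1) → ℝ) → ℝ) (p : Fin (n + 1) → ℝ) : Prop :=
  p 0 * partialDeriv 0 (partialDeriv 0 w) p + b * partialDeriv 0 w p = E w p

lemma HasExpansion.fuchsOp {W : MvPowerSeries (Fin (n + 1)) ℝ} {w : (Fin (n + 1) → ℝ) → ℝ}
    (b : ℝ) (hW : HasExpansion W w) : HasExpansion (fuchsOp b W) fun p =>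
      p 0 * partialDeriv 0 (partialDeriv 0 w) p + b * partialDeriv 0 w p :=
  ((HasExpansion.X 0).mul ((hW.pderiv 0).pderiv 0)).add ((HasExpansion.C b).mul (hW.pderiv 0))

lemma HasExpansion.of_weightedNorm_lt_top {F : MvPowerSeries (Fin (n + 1)) ℝ} {ρ r : ℝ≥0}
    (hρ : 0 < ρ) (hρ₁ : ρ ≤ 1) (hr : 0 < r) (h : weightedNorm ρ r F < ⊤) :
    ∃ f, HasExpansion F f := by
  obtain ⟨f, hf⟩ := (absSummableAt_of_weightedNorm_lt_top hρ₁ h).exists_hasSumOnBall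
  exact ⟨f, _, by positivity, hf⟩

lemma exists_hasExpansion_fuchsInv (hb : 0 < b) {y : MvPowerSeries (Fin (n + 1)) ℝ} {ρ r : ℝ≥0}
    (hρ : 0 < ρ) (hρ₁ : ρ ≤ 1) (hr : 0 < r) (hy : weightedNorm ρ r y < ⊤) :
    ∃ g, HasExpansion (fuchsInv b y) g := by
  obtain ⟨K, hK⟩ := exists_nnnorm_div_le hb 0 1
  refine HasExpansion.of_weightedNorm_lt_top hρ hρ₁ hr ((weightedNorm_mul_le _ _ _ _).trans_lt ?_)
  rw [weightedNorm_X_zero]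
  refine ENNReal.mul_lt_top ENNReal.coe_lt_top ((weightedNorm_diagonalOp_le (K := K) (fun k => ?_)
    ρ r y).trans_lt (ENNReal.mul_lt_top ENNReal.coe_lt_top hy))
  refine le_trans ?_ (hK k)
  rw [← NNReal.coe_le_coe, coe_nnnorm, coe_nnnorm, Real.norm_of_nonneg (by positivity),
    Real.norm_of_nonneg (by positivity), zero_mul, zero_add, one_mul]
  gcongr
  exact le_mul_of_one_le_left (by positivity) (le_add_of_nonneg_left k.cast_nonneg)

theorem exists_fuchsEq (hb : 0 < b) (hE : IsSmoothingOperator b E) {w₀ : (Fin (n + 1) → ℝ) → ℝ}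
    (hw₀ : AnalyticAt ℝ w₀ 0) : ∃ w, AnalyticAt ℝ w 0 ∧
      (∀ᶠ p in nhds 0, w (Function.update p 0 0) = w₀ (Function.update p 0 0)) ∧
      ∀ᶠ p in nhds 0, FuchsEq b E w p := by
  obtain ⟨T, hT, hS⟩ := hE
  obtain ⟨W₀, hW₀⟩ := HasExpansion.of_analyticAt hw₀
  obtain ⟨r, hr, hr0⟩ :=
    ((hS hW₀.sliceZero (pderiv_zero_sliceZero W₀)).and self_mem_nhdsWithin).exists
  obtain ⟨y, hy, ρ, hρ, hρ₁, hyρ⟩ := hr.exists_fixedPoint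
  obtain ⟨g, hg⟩ := exists_hasExpansion_fuchsInv hb hρ hρ₁ hr0 hyρ
  have hW := hW₀.sliceZero.add hg
  refine ⟨_, hW.analyticAt, ?_, ?_⟩
  · have hslice := hW.sliceZero
    rw [fuchsInv, sliceZero_sliceZero_add_X_zero_mul] at hslice
    exact hslice.eventuallyEq hW₀.sliceZero
  · have hop := hW.fuchsOp b
    rw [fuchsOp_add_fuchsInv hb (pderiv_zero_sliceZero W₀), ← hy] at hop
    exact hop.eventuallyEq (hT hW)

theorem eventuallyEq_of_fuchsEq (hb : 0 < b) (hE : IsSmoothingOperator b E)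
    {w w' : (Fin (n + 1) → ℝ) → ℝ} (hw : AnalyticAt ℝ w 0) (hw' : AnalyticAt ℝ w' 0)
    (h₀ : ∀ᶠ p in nhds 0, w (Function.update p 0 0) = w' (Function.update p 0 0))
    (h : ∀ᶠ p in nhds 0, 0 < p 0 → FuchsEq b E w p)
    (h' : ∀ᶠ p in nhds 0, 0 < p 0 → FuchsEq b E w' p) : w =ᶠ[nhds 0] w' := by
  obtain ⟨T, hT, hS⟩ := hE
  obtain ⟨W, hW⟩ := HasExpansion.of_analyticAt hw
  obtain ⟨W', hW'⟩ := HasExpansion.of_analyticAt hw'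
  have hslice : sliceZero W' = sliceZero W :=
    hW'.sliceZero.unique hW.sliceZero (h₀.mono fun _ => Eq.symm)
  have hop {V v} (hV : HasExpansion V v) (hv : ∀ᶠ p in nhds 0, 0 < p 0 → FuchsEq b E v p) :
      T V = fuchsOp b V := by
    have hsub := (hT hV).sub (hV.fuchsOp b)
    refine sub_eq_zero.1 (hsub.eq_zero (eventuallyEq_zero_of_pos_coord_zero hsub.analyticAt ?_))
    filter_upwards [hv] with p hp hp0 using sub_eq_zero.2 (hp hp0).symm
  obtain ⟨r, hr⟩ := (hS hW.sliceZero (pderiv_zero_sliceZero W)).exists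
  have hfix : fuchsOp b W = fuchsOp b W' := by
    refine hr.fixedPoint_unique ?_ ?_
    · rw [sliceZero_add_fuchsInv_fuchsOp hb, hop hW h]
    · rw [← hslice, sliceZero_add_fuchsInv_fuchsOp hb, hop hW' h']
  have hWW' : W = W' := by
    rw [← sliceZero_add_fuchsInv_fuchsOp hb W, ← sliceZero_add_fuchsInv_fuchsOp hb W', hfix, hslice]
  exact hW.eventuallyEq (hWW' ▸ hW')

end FuchsianCauchyProblem

section PartialDerivativeCalculus

variable {σ : Type*} [DecidableEq σ] {f g : (σ → ℝ) → ℝ} {p : σ → ℝ}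

lemma hasDerivAt_partialDeriv [Finite σ] (hf : DifferentiableAt ℝ f p) (j : σ) :
    HasDerivAt (fun y => f (Function.update p j y)) (partialDeriv j f p) (p j) := by
  cases nonempty_fintype σ
  refine (DifferentiableAt.comp (p j) (g := f) ?_
    (hasDerivAt_update p j (p j)).differentiableAt).hasDerivAt
  rwa [Function.update_eq_self]

lemma partialDeriv_mul [Finite σ] (hf : DifferentiableAt ℝ f p) (hg : DifferentiableAt ℝ g p)
    (j : σ) :
    partialDeriv j (fun q => f q * g q) p =
      partialDeriv j f p * g p + f p * partialDeriv j g p := by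
  have h := ((hasDerivAt_partialDeriv hf j).mul (hasDerivAt_partialDeriv hg j)).deriv
  simp only [Function.update_eq_self] at h
  exact h

lemma partialDeriv_sub [Finite σ] (hf : DifferentiableAt ℝ f p) (hg : DifferentiableAt ℝ g p)
    (j : σ) :
    partialDeriv j (fun q => f q - g q) p = partialDeriv j f p - partialDeriv j g p :=
  ((hasDerivAt_partialDeriv hf j).sub (hasDerivAt_partialDeriv hg j)).deriv

lemma partialDeriv_eq_fderiv [Finite σ] (hf : DifferentiableAt ℝ f p) (j : σ) :
    partialDeriv j f p = fderiv ℝ f p (Pi.single j 1) := by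
  cases nonempty_fintype σ
  have hf' : HasFDerivAt f (fderiv ℝ f p) (Function.update p j (p j)) := by
    rw [Function.update_eq_self]
    exact hf.hasFDerivAt
  exact (hf'.comp_hasDerivAt (p j) (hasDerivAt_update p j (p j))).deriv

variable [Fintype σ]

lemma partialDeriv_eventuallyEq_fderiv (hf : AnalyticAt ℝ f p) (j : σ) :
    partialDeriv j f =ᶠ[nhds p] fun q => fderiv ℝ f q (Pi.single j 1) :=
  hf.eventually_analyticAt.mono fun _ hq => partialDeriv_eq_fderiv hq.differentiableAt j

lemma analyticAt_partialDeriv (hf : AnalyticAt ℝ f p) (j : σ) :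
    AnalyticAt ℝ (partialDeriv j f) p :=
  (((ContinuousLinearMap.apply ℝ ℝ (Pi.single j 1 : σ → ℝ)).analyticAt _).comp hf.fderiv).congr
    (partialDeriv_eventuallyEq_fderiv hf j).symm

lemma partialDeriv_partialDeriv_eq_fderiv (hf : AnalyticAt ℝ f p) (i j : σ) :
    partialDeriv i (partialDeriv j f) p =
      fderiv ℝ (fderiv ℝ f) p (Pi.single i 1) (Pi.single j 1) := by
  have hd : HasFDerivAt (fun q => fderiv ℝ f q (Pi.single j 1))
      ((ContinuousLinearMap.apply ℝ ℝ (Pi.single j 1)).comp (fderiv ℝ (fderiv ℝ f) p)) p :=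
    (ContinuousLinearMap.apply ℝ ℝ (Pi.single j 1 : σ → ℝ)).hasFDerivAt.comp p
      hf.fderiv.differentiableAt.hasFDerivAt
  rw [partialDeriv_congr (partialDeriv_eventuallyEq_fderiv hf j),
    partialDeriv_eq_fderiv hd.differentiableAt, hd.fderiv]
  rfl

lemma partialDeriv_comm (hf : AnalyticAt ℝ f p) (i j : σ) :
    partialDeriv i (partialDeriv j f) p = partialDeriv j (partialDeriv i f) p := by
  rw [partialDeriv_partialDeriv_eq_fderiv hf, partialDeriv_partialDeriv_eq_fderiv hf]
  exact hf.contDiffAt.isSymmSndFDerivAt (n := 2) (by simp) _ _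

end PartialDerivativeCalculus

section Straightening

variable {n : ℕ} {x₀ : Fin n → ℝ} {ψ : (Fin n → ℝ) → ℝ} {t : ℝ} {x : Fin n → ℝ}

/-- The change of variables `(t, x) ↦ (t - ψ x, x - x₀)` that maps the hypersurface `t = ψ x` to
the coordinate hyperplane `p 0 = 0` and its point above `x₀` to the origin. -/
def straighten (x₀ : Fin n → ℝ) (ψ : (Fin n → ℝ) → ℝ) :
    ℝ × (Fin n → ℝ) ≃ (Fin (n + 1) → ℝ) where
  toFun q := Fin.cons (q.1 - ψ q.2) (q.2 - x₀)
  invFun p := (p 0 + ψ (x₀ + Fin.tail p), x₀ + Fin.tail p)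
  left_inv q := by simp
  right_inv p := by simp

lemma straighten_apply_zero (q : ℝ × (Fin n → ℝ)) : straighten x₀ ψ q 0 = q.1 - ψ q.2 := rfl

lemma straighten_apply_succ (q : ℝ × (Fin n → ℝ)) (i : Fin n) :
    straighten x₀ ψ q i.succ = q.2 i - x₀ i := rfl

lemma straighten_symm_snd (p : Fin (n + 1) → ℝ) :
    ((straighten x₀ ψ).symm p).2 = x₀ + Fin.tail p := rfl

lemma straighten_graph_self : straighten x₀ ψ (ψ x₀, x₀) = 0 := by
  ext i
  refine Fin.cases ?_ (fun i => ?_) i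
  · exact sub_self _
  · exact sub_self _

lemma straighten_symm_zero : (straighten x₀ ψ).symm 0 = (ψ x₀, x₀) := by
  rw [Equiv.symm_apply_eq, straighten_graph_self]

lemma lt_straighten_symm_fst_iff (p : Fin (n + 1) → ℝ) :
    ψ ((straighten x₀ ψ).symm p).2 < ((straighten x₀ ψ).symm p).1 ↔ 0 < p 0 := by
  rw [← sub_pos, ← straighten_apply_zero, Equiv.apply_symm_apply]

lemma straighten_symm_update_zero (p : Fin (n + 1) → ℝ) :
    (straighten x₀ ψ).symm (Function.update p 0 0) =
      (ψ ((straighten x₀ ψ).symm p).2, ((straighten x₀ ψ).symm p).2) := by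
  rw [Equiv.symm_apply_eq]
  ext i
  refine Fin.cases ?_ (fun i => ?_) i
  · simp [straighten_apply_zero]
  · simp [straighten_apply_succ, straighten_symm_snd, Fin.tail]

lemma analyticAt_straighten {q : ℝ × (Fin n → ℝ)} (hψ : AnalyticAt ℝ ψ q.2) :
    AnalyticAt ℝ (straighten x₀ ψ) q := by
  refine AnalyticAt.pi fun i => Fin.cases ?_ (fun i => ?_) i
  · exact analyticAt_fst.sub (hψ.comp (f := Prod.snd) analyticAt_snd)
  · exact (((ContinuousLinearMap.proj (R := ℝ) i).analyticAt q.2).comp (f := Prod.snd)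
      analyticAt_snd).sub analyticAt_const

lemma analyticAt_straighten_symm_snd (p : Fin (n + 1) → ℝ) :
    AnalyticAt ℝ (fun p => ((straighten x₀ ψ).symm p).2) p :=
  AnalyticAt.pi fun i =>
    analyticAt_const.add ((ContinuousLinearMap.proj (R := ℝ) i.succ).analyticAt p)

lemma analyticAt_straighten_symm {p : Fin (n + 1) → ℝ}
    (hψ : AnalyticAt ℝ ψ ((straighten x₀ ψ).symm p).2) :
    AnalyticAt ℝ (straighten x₀ ψ).symm p :=
  (((ContinuousLinearMap.proj (R := ℝ) 0).analyticAt p).add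
    (hψ.comp (f := fun p => ((straighten x₀ ψ).symm p).2)
      (analyticAt_straighten_symm_snd p))).prod (analyticAt_straighten_symm_snd (ψ := ψ) p)

lemma hasDerivAt_straighten_fst (t : ℝ) (x : Fin n → ℝ) :
    HasDerivAt (fun s => straighten x₀ ψ (s, x)) (Pi.single 0 1) t := by
  refine hasDerivAt_pi.2 fun i => Fin.cases ?_ (fun i => ?_) i
  · simpa [straighten_apply_zero] using (hasDerivAt_id t).sub_const (ψ x)
  · simpa [straighten_apply_succ] using hasDerivAt_const t (x i - x₀ i)

lemma hasDerivAt_straighten_snd (hψ : DifferentiableAt ℝ ψ x) (i : Fin n) :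
    HasDerivAt (fun y => straighten x₀ ψ (t, Function.update x i y))
      (Pi.single i.succ 1 - gradp ψ x i • Pi.single 0 1) (x i) := by
  refine hasDerivAt_pi.2 fun k => Fin.cases ?_ (fun k => ?_) k
  · simpa [straighten_apply_zero, gradp, partialDeriv] using
      (hasDerivAt_partialDeriv hψ i).const_sub t
  · simpa [straighten_apply_succ, Pi.single_apply] using
      (hasDerivAt_pi.1 (hasDerivAt_update x i (x i)) k).sub_const (x₀ k)

variable {g : (Fin (n + 1) → ℝ) → ℝ}

lemma ptd_comp_straighten (hg : DifferentiableAt ℝ g (straighten x₀ ψ (t, x))) :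
    ptd (fun t x => g (straighten x₀ ψ (t, x))) t x =
      partialDeriv 0 g (straighten x₀ ψ (t, x)) := by
  rw [partialDeriv_eq_fderiv hg]
  exact (hg.hasFDerivAt.comp_hasDerivAt t (hasDerivAt_straighten_fst t x)).deriv

lemma pxd_comp_straighten (hψ : DifferentiableAt ℝ ψ x)
    (hg : DifferentiableAt ℝ g (straighten x₀ ψ (t, x))) (i : Fin n) :
    pxd i (fun t x => g (straighten x₀ ψ (t, x))) t x =
      partialDeriv i.succ g (straighten x₀ ψ (t, x)) -
        gradp ψ x i * partialDeriv 0 g (straighten x₀ ψ (t, x)) := by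
  have hg' : HasFDerivAt g (fderiv ℝ g (straighten x₀ ψ (t, x)))
      (straighten x₀ ψ (t, Function.update x i (x i))) := by
    rw [Function.update_eq_self]
    exact hg.hasFDerivAt
  rw [partialDeriv_eq_fderiv hg, partialDeriv_eq_fderiv hg, ← smul_eq_mul, ← map_smul, ← map_sub]
  exact (hg'.comp_hasDerivAt (x i) (hasDerivAt_straighten_snd hψ i)).deriv

lemma ptd_congr {u u' : ℝ → (Fin n → ℝ) → ℝ}
    (h : ∀ᶠ q : ℝ × (Fin n → ℝ) in nhds (t, x), u q.1 q.2 = u' q.1 q.2) :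
    ptd u t x = ptd u' t x :=
  EventuallyEq.deriv_eq
    ((show ContinuousAt (fun s : ℝ => (s, x)) t by fun_prop).eventually h)

lemma pxd_congr {u u' : ℝ → (Fin n → ℝ) → ℝ}
    (h : ∀ᶠ q : ℝ × (Fin n → ℝ) in nhds (t, x), u q.1 q.2 = u' q.1 q.2) (i : Fin n) :
    pxd i u t x = pxd i u' t x := by
  have hline : Tendsto (fun y : ℝ => (t, Function.update x i y)) (nhds (x i)) (nhds (t, x)) :=
    tendsto_const_nhds.prodMk_nhds (tendsto_update x i)
  exact EventuallyEq.deriv_eq (hline.eventually h)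

lemma ptd_ptd_comp_straighten (hψ : AnalyticAt ℝ ψ x)
    (hg : AnalyticAt ℝ g (straighten x₀ ψ (t, x))) :
    ptd (ptd fun t x => g (straighten x₀ ψ (t, x))) t x =
      partialDeriv 0 (partialDeriv 0 g) (straighten x₀ ψ (t, x)) := by
  rw [← ptd_comp_straighten (analyticAt_partialDeriv hg 0).differentiableAt]
  refine ptd_congr ?_
  filter_upwards [(analyticAt_straighten (q := (t, x)) hψ).continuousAt.eventually
    hg.eventually_analyticAt] with q hq
  exact ptd_comp_straighten hq.differentiableAt

/-- The gradient of `ψ` as a function of the straightened coordinates. -/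
noncomputable def graphGrad (x₀ : Fin n → ℝ) (ψ : (Fin n → ℝ) → ℝ) (p : Fin (n + 1) → ℝ) :
    Fin n → ℝ :=
  gradp ψ ((straighten x₀ ψ).symm p).2

lemma graphGrad_straighten (q : ℝ × (Fin n → ℝ)) :
    graphGrad x₀ ψ (straighten x₀ ψ q) = gradp ψ q.2 := by
  rw [graphGrad, Equiv.symm_apply_apply]

lemma graphGrad_update_zero (p : Fin (n + 1) → ℝ) (y : ℝ) :
    graphGrad x₀ ψ (Function.update p 0 y) = graphGrad x₀ ψ p := by
  rw [graphGrad, graphGrad, straighten_symm_snd, straighten_symm_snd, Fin.tail_update_zero]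

lemma partialDeriv_zero_graphGrad (i : Fin n) (p : Fin (n + 1) → ℝ) :
    partialDeriv 0 (fun p => graphGrad x₀ ψ p i) p = 0 := by
  simp only [partialDeriv, graphGrad_update_zero, deriv_const]

lemma analyticAt_graphGrad {p : Fin (n + 1) → ℝ}
    (hψ : AnalyticAt ℝ ψ ((straighten x₀ ψ).symm p).2) (i : Fin n) :
    AnalyticAt ℝ (fun p => graphGrad x₀ ψ p i) p :=
  (analyticAt_partialDeriv hψ i).comp (f := fun p => ((straighten x₀ ψ).symm p).2)
    (analyticAt_straighten_symm_snd p)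

lemma pxd_pxd_comp_straighten (hψ : AnalyticAt ℝ ψ x)
    (hg : AnalyticAt ℝ g (straighten x₀ ψ (t, x))) (i : Fin n) {p : Fin (n + 1) → ℝ}
    (hp : p = straighten x₀ ψ (t, x)) :
    pxd i (pxd i fun t x => g (straighten x₀ ψ (t, x))) t x =
      partialDeriv i.succ (partialDeriv i.succ g) p -
        partialDeriv i.succ (fun p => graphGrad x₀ ψ p i) p * partialDeriv 0 g p -
        2 * (graphGrad x₀ ψ p i * partialDeriv i.succ (partialDeriv 0 g) p) +
        graphGrad x₀ ψ p i ^ 2 * partialDeriv 0 (partialDeriv 0 g) p := by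
  rw [← hp] at hg
  have hN : DifferentiableAt ℝ (fun p => graphGrad x₀ ψ p i) p :=
    (analyticAt_graphGrad (by simpa [hp]) i).differentiableAt
  have h₀ := (analyticAt_partialDeriv hg 0).differentiableAt
  have hi := (analyticAt_partialDeriv hg i.succ).differentiableAt
  let G p := partialDeriv i.succ g p - graphGrad x₀ ψ p i * partialDeriv 0 g p
  have hpxd : ∀ᶠ q : ℝ × (Fin n → ℝ) in nhds (t, x),
      pxd i (fun t x => g (straighten x₀ ψ (t, x))) q.1 q.2 = G (straighten x₀ ψ q) := by
    rw [hp] at hg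
    filter_upwards [(analyticAt_straighten (q := (t, x)) hψ).continuousAt.eventually
      hg.eventually_analyticAt, continuousAt_snd.eventually hψ.eventually_analyticAt] with q hgq hψq
    rw [pxd_comp_straighten hψq.differentiableAt hgq.differentiableAt]
    simp only [G, graphGrad_straighten]
  have hmul : DifferentiableAt ℝ (fun q => graphGrad x₀ ψ q i * partialDeriv 0 g q) p := hN.mul h₀
  have hG : ∀ j, partialDeriv j G p = partialDeriv j (partialDeriv i.succ g) p -
      (partialDeriv j (fun p => graphGrad x₀ ψ p i) p * partialDeriv 0 g p +
        graphGrad x₀ ψ p i * partialDeriv j (partialDeriv 0 g) p) := fun j => by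
    rw [← partialDeriv_mul hN h₀, ← partialDeriv_sub hi hmul]
  rw [pxd_congr (u' := fun t x => G (straighten x₀ ψ (t, x))) hpxd,
    pxd_comp_straighten hψ.differentiableAt (hp ▸ hi.sub hmul), ← hp, hG, hG,
    partialDeriv_zero_graphGrad, partialDeriv_comm hg 0 i.succ,
    ← graphGrad_straighten (x₀ := x₀) (ψ := ψ) (t, x), ← hp]
  ring

/-- The value `1 - |∇ψ|²` of the symbol of the wave operator on the conormal of `t = ψ x`, in
straightened coordinates. -/
noncomputable def graphSymbol (x₀ : Fin n → ℝ) (ψ : (Fin n → ℝ) → ℝ) (p : Fin (n + 1) → ℝ) : ℝ :=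
  1 - ∑ i, graphGrad x₀ ψ p i ^ 2

/-- The Laplacian of `ψ` as a function of the straightened coordinates. -/
noncomputable def graphLaplacian (x₀ : Fin n → ℝ) (ψ : (Fin n → ℝ) → ℝ)
    (p : Fin (n + 1) → ℝ) : ℝ :=
  ∑ i, partialDeriv i.succ (fun p => graphGrad x₀ ψ p i) p

lemma analyticAt_graphSymbol {p : Fin (n + 1) → ℝ}
    (hψ : AnalyticAt ℝ ψ ((straighten x₀ ψ).symm p).2) : AnalyticAt ℝ (graphSymbol x₀ ψ) p :=
  analyticAt_const.sub (Finset.analyticAt_fun_sum _ fun i _ => (analyticAt_graphGrad hψ i).pow 2)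

lemma analyticAt_graphLaplacian {p : Fin (n + 1) → ℝ}
    (hψ : AnalyticAt ℝ ψ ((straighten x₀ ψ).symm p).2) : AnalyticAt ℝ (graphLaplacian x₀ ψ) p :=
  Finset.analyticAt_fun_sum _ fun i _ => analyticAt_partialDeriv (analyticAt_graphGrad hψ i) _

lemma ptd_ptd_sub_lapx_comp_straighten (hψ : AnalyticAt ℝ ψ x) {p : Fin (n + 1) → ℝ}
    (hp : p = straighten x₀ ψ (t, x)) (hg : AnalyticAt ℝ g p) :
    ptd (ptd fun t x => g (straighten x₀ ψ (t, x))) t x -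
        lapx (fun t x => g (straighten x₀ ψ (t, x))) t x =
      graphSymbol x₀ ψ p * partialDeriv 0 (partialDeriv 0 g) p +
        2 * ∑ i, graphGrad x₀ ψ p i * partialDeriv i.succ (partialDeriv 0 g) p -
        ∑ i : Fin n, partialDeriv i.succ (partialDeriv i.succ g) p +
        graphLaplacian x₀ ψ p * partialDeriv 0 g p := by
  rw [hp] at hg
  simp only [graphSymbol, graphLaplacian, lapx, ptd_ptd_comp_straighten hψ hg,
    pxd_pxd_comp_straighten hψ hg _ hp, ← hp, Finset.sum_add_distrib,
    Finset.sum_sub_distrib, ← Finset.mul_sum, ← Finset.sum_mul]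
  ring

/-- The derivatives of `g` along the hyperplane `p 0 = 0`, as a vector of `ℝ × ℝⁿ`. -/
noncomputable def tangentialGrad (g : (Fin (n + 1) → ℝ) → ℝ) (p : Fin (n + 1) → ℝ) :
    Fin (n + 1) → ℝ :=
  Fin.cons 0 fun i => partialDeriv i.succ g p

/-- The conormal `(-1, ∇ψ)` of the hypersurface `t = ψ x`, in straightened coordinates. -/
noncomputable def conormal (x₀ : Fin n → ℝ) (ψ : (Fin n → ℝ) → ℝ) (p : Fin (n + 1) → ℝ) :
    Fin (n + 1) → ℝ :=
  Fin.cons (-1) (graphGrad x₀ ψ p)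

lemma analyticAt_conormal {p : Fin (n + 1) → ℝ}
    (hψ : AnalyticAt ℝ ψ ((straighten x₀ ψ).symm p).2) (j : Fin (n + 1)) :
    AnalyticAt ℝ (fun p => conormal x₀ ψ p j) p :=
  Fin.cases analyticAt_const (analyticAt_graphGrad hψ) j

lemma cons_ptd_gradx_comp_straighten (hψ : DifferentiableAt ℝ ψ x)
    (hg : DifferentiableAt ℝ g (straighten x₀ ψ (t, x))) :
    (Fin.cons (ptd (fun t x => g (straighten x₀ ψ (t, x))) t x)
        (gradx (fun t x => g (straighten x₀ ψ (t, x))) t x) : Fin (n + 1) → ℝ) =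
      (-partialDeriv 0 g (straighten x₀ ψ (t, x))) • conormal x₀ ψ (straighten x₀ ψ (t, x)) +
        tangentialGrad g (straighten x₀ ψ (t, x)) := by
  ext j
  refine Fin.cases ?_ (fun i => ?_) j
  · simp [conormal, tangentialGrad, ptd_comp_straighten hg]
  · simp [conormal, tangentialGrad, gradx, pxd_comp_straighten hψ hg, graphGrad_straighten]
    ring

end Straightening

section LogarithmicSingularity

variable {n : ℕ} {a : ℝ} {w : (Fin (n + 1) → ℝ) → ℝ} {p : Fin (n + 1) → ℝ}

/-- The singular function `-a log s + w`, where `s = p 0`. -/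
noncomputable def withLog (a : ℝ) (w : (Fin (n + 1) → ℝ) → ℝ) (p : Fin (n + 1) → ℝ) : ℝ :=
  -a * Real.log (p 0) + w p

lemma analyticAt_withLog (hw : AnalyticAt ℝ w p) (hp : 0 < p 0) :
    AnalyticAt ℝ (withLog a w) p := by
  have hs : AnalyticAt ℝ (fun q : Fin (n + 1) → ℝ => q 0) p := analyticAt_pi_iff.1 analyticAt_id 0
  exact (analyticAt_const.fun_mul ((analyticAt_log hp).comp_of_eq hs rfl)).fun_add hw

lemma partialDeriv_zero_withLog (hw : DifferentiableAt ℝ w p) (hp : 0 < p 0) :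
    partialDeriv 0 (withLog a w) p = -(a / p 0) + partialDeriv 0 w p := by
  have h := (((Real.hasDerivAt_log hp.ne').const_mul (-a)).fun_add
    (hasDerivAt_partialDeriv hw 0)).deriv
  rw [neg_mul, ← div_eq_mul_inv] at h
  simpa only [partialDeriv, withLog, Function.update_self] using h

lemma partialDeriv_succ_withLog (i : Fin n) :
    partialDeriv i.succ (withLog a w) = partialDeriv i.succ w := by
  funext p
  simp only [partialDeriv, withLog, Function.update_of_ne i.succ_ne_zero.symm]
  exact deriv_const_add _

lemma partialDeriv_zero_partialDeriv_zero_withLog (hw : AnalyticAt ℝ w p) (hp : 0 < p 0) :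
    partialDeriv 0 (partialDeriv 0 (withLog a w)) p =
      a / p 0 ^ 2 + partialDeriv 0 (partialDeriv 0 w) p := by
  have hnear : partialDeriv 0 (withLog a w) =ᶠ[nhds p] fun q =>
      -(a / q 0) + partialDeriv 0 w q := by
    filter_upwards [hw.eventually_analyticAt, (continuous_apply 0).continuousAt.eventually
      (lt_mem_nhds hp)] with q hq hq0 using partialDeriv_zero_withLog hq.differentiableAt hq0
  have hinv : HasDerivAt (fun y => -(a / y)) (a / p 0 ^ 2) (p 0) := by
    simpa [div_eq_mul_inv] using ((hasDerivAt_inv hp.ne').const_mul a).fun_neg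
  rw [partialDeriv_congr hnear]
  simpa only [partialDeriv, Function.update_self] using
    (hinv.fun_add (hasDerivAt_partialDeriv (analyticAt_partialDeriv hw 0).differentiableAt 0)).deriv

lemma partialDeriv_succ_partialDeriv_zero_withLog (hw : AnalyticAt ℝ w p) (hp : 0 < p 0)
    (i : Fin n) : partialDeriv i.succ (partialDeriv 0 (withLog a w)) p =
      partialDeriv i.succ (partialDeriv 0 w) p := by
  rw [partialDeriv_comm (analyticAt_withLog hw hp), partialDeriv_succ_withLog,
    partialDeriv_comm hw]

lemma tangentialGrad_withLog : tangentialGrad (withLog a w) p = tangentialGrad w p := by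
  simp only [tangentialGrad, partialDeriv_succ_withLog]

end LogarithmicSingularity

section HomogeneousPolynomials

open scoped Matrix

variable {n : ℕ} {U : Set (ℝ × (Fin n → ℝ))} {f : ℝ → (Fin n → ℝ) → ℝ → (Fin n → ℝ) → ℝ}

lemma HomogPoly.exists_matrix (h : HomogPoly 2 U f) :
    ∃ Q : ℝ × (Fin n → ℝ) → Matrix (Fin (n + 1)) (Fin (n + 1)) ℝ,
      (∀ i j, AnalyticOnNhd ℝ (fun q => Q q i j) U) ∧
      ∀ t x τ ξ, f t x τ ξ = Fin.cons τ ξ ⬝ᵥ Q (t, x) *ᵥ Fin.cons τ ξ := by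
  obtain ⟨c, hc, h⟩ := h
  refine ⟨fun q i j => c ![i, j] q.1 q.2, fun i j => hc _, fun t x τ ξ => ?_⟩
  simp only [h, dotProduct, Matrix.mulVec, Finset.mul_sum]
  rw [← Fintype.sum_prod_type']
  refine Fintype.sum_equiv (finTwoArrowEquiv _) _ _ fun μ => ?_
  have hμ : ![μ 0, μ 1] = μ := by
    ext i
    fin_cases i <;> rfl
  change _ = _ * (c ![μ 0, μ 1] t x * _)
  rw [hμ, Fin.prod_univ_two, mul_left_comm]
  rfl

lemma HomogPoly.exists_vector (h : HomogPoly 1 U f) :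
    ∃ ℓ : ℝ × (Fin n → ℝ) → Fin (n + 1) → ℝ,
      (∀ i, AnalyticOnNhd ℝ (fun q => ℓ q i) U) ∧
      ∀ t x τ ξ, f t x τ ξ = ℓ (t, x) ⬝ᵥ Fin.cons τ ξ := by
  obtain ⟨c, hc, h⟩ := h
  refine ⟨fun q i => c (fun _ => i) q.1 q.2, fun i => hc _, fun t x τ ξ => ?_⟩
  rw [h, dotProduct]
  refine Fintype.sum_equiv (Equiv.funUnique (Fin 1) (Fin (n + 1))) _ _ fun μ => ?_
  have hμ : (fun _ => μ 0) = μ := by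
    ext i
    fin_cases i
    rfl
  simp [hμ]

lemma HomogPoly.exists_function (h : HomogPoly 0 U f) :
    ∃ c : ℝ × (Fin n → ℝ) → ℝ, AnalyticOnNhd ℝ c U ∧ ∀ t x τ ξ, f t x τ ξ = c (t, x) := by
  obtain ⟨c, hc, h⟩ := h
  refine ⟨fun q => c ![] q.1 q.2, hc _, fun t x τ ξ => ?_⟩
  rw [h, Fintype.sum_subsingleton _ ![], Finset.univ_eq_empty, Finset.prod_empty, mul_one]

end HomogeneousPolynomials

section Reduction

open scoped Matrix

variable {n : ℕ} {b : ℝ}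

lemma IsSmoothingOperator.dotProduct {m : Type*} [Fintype m]
    {V W : ((Fin (n + 1) → ℝ) → ℝ) → (Fin (n + 1) → ℝ) → m → ℝ}
    (hV : ∀ i, IsSmoothingOperator b fun w p => V w p i)
    (hW : ∀ i, IsSmoothingOperator b fun w p => W w p i) :
    IsSmoothingOperator b fun w p => V w p ⬝ᵥ W w p :=
  sum _ fun i => (hV i).mul (hW i)

lemma IsSmoothingOperator.mulVec {m : Type*} [Fintype m]
    {Q : (Fin (n + 1) → ℝ) → Matrix m m ℝ}
    {V : ((Fin (n + 1) → ℝ) → ℝ) → (Fin (n + 1) → ℝ) → m → ℝ}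
    (hQ : ∀ i j, AnalyticAt ℝ (fun p => Q p i j) 0)
    (hV : ∀ i, IsSmoothingOperator b fun w p => V w p i) (i : m) :
    IsSmoothingOperator b fun w p => (Q p *ᵥ V w p) i :=
  dotProduct (V := fun _ p => Q p i) (fun j => of_analyticAt (hQ i j)) hV

lemma isSmoothingOperator_tangentialGrad (hb : 0 < b) (j : Fin (n + 1)) :
    IsSmoothingOperator b fun w p => tangentialGrad w p j := by
  refine Fin.cases ?_ (fun i => ?_) j
  · exact IsSmoothingOperator.of_analyticAt (c := fun _ => 0) analyticAt_const
  · exact IsSmoothingOperator.partialDeriv hb i.succ_ne_zero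

/-- The operator `E` for which `-a log s + w` solves, in straightened coordinates, the wave
equation with right-hand side `v ⬝ᵥ Q *ᵥ v + ℓ ⬝ᵥ v + c`, `v = (∂_t u, ∇u)`, exactly when
`s ∂_s² w + 2 ∂_s w = E w`. Here `g` is the quotient by `s` of the difference between the value
of the quadratic form `Q` on the conormal and `graphSymbol / a`. -/
noncomputable def reducedOperator (x₀ : Fin n → ℝ) (ψ : (Fin n → ℝ) → ℝ) (a : ℝ)
    (Q : (Fin (n + 1) → ℝ) → Matrix (Fin (n + 1)) (Fin (n + 1)) ℝ)
    (ℓ : (Fin (n + 1) → ℝ) → Fin (n + 1) → ℝ) (c g : (Fin (n + 1) → ℝ) → ℝ)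
    (w : (Fin (n + 1) → ℝ) → ℝ) (p : Fin (n + 1) → ℝ) : ℝ :=
  (graphSymbol x₀ ψ p)⁻¹ *
    ((a - p 0 * partialDeriv 0 w p) *
        (graphLaplacian x₀ ψ p + g p * (a - p 0 * partialDeriv 0 w p) +
          (conormal x₀ ψ p ⬝ᵥ Q p *ᵥ tangentialGrad w p +
            tangentialGrad w p ⬝ᵥ Q p *ᵥ conormal x₀ ψ p) + ℓ p ⬝ᵥ conormal x₀ ψ p) +
      graphSymbol x₀ ψ p / a * (p 0 * (partialDeriv 0 w p * partialDeriv 0 w p)) +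
      ∑ i : Fin n, p 0 * partialDeriv i.succ (partialDeriv i.succ w) p -
      ∑ i, 2 * graphGrad x₀ ψ p i * (p 0 * partialDeriv i.succ (partialDeriv 0 w) p) +
      p 0 * (tangentialGrad w p ⬝ᵥ Q p *ᵥ tangentialGrad w p + ℓ p ⬝ᵥ tangentialGrad w p + c p))

variable {x₀ : Fin n → ℝ} {ψ : (Fin n → ℝ) → ℝ} {a : ℝ}
  {Q : (Fin (n + 1) → ℝ) → Matrix (Fin (n + 1)) (Fin (n + 1)) ℝ}
  {ℓ : (Fin (n + 1) → ℝ) → Fin (n + 1) → ℝ} {c g : (Fin (n + 1) → ℝ) → ℝ}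

theorem isSmoothingOperator_reducedOperator (hb : 0 < b) (hψ : AnalyticAt ℝ ψ x₀)
    (hA : graphSymbol x₀ ψ 0 ≠ 0) (hQ : ∀ i j, AnalyticAt ℝ (fun p => Q p i j) 0)
    (hℓ : ∀ i, AnalyticAt ℝ (fun p => ℓ p i) 0) (hc : AnalyticAt ℝ c 0) (hg : AnalyticAt ℝ g 0) :
    IsSmoothingOperator b (reducedOperator x₀ ψ a Q ℓ c g) := by
  have hψ' : AnalyticAt ℝ ψ ((straighten x₀ ψ).symm 0).2 := by rwa [straighten_symm_zero]
  have hsymbol := analyticAt_graphSymbol hψ'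
  have hs : AnalyticAt ℝ (fun p : Fin (n + 1) → ℝ => p 0) 0 :=
    analyticAt_pi_iff.1 analyticAt_id 0
  have hP i := IsSmoothingOperator.of_analyticAt (b := b) (analyticAt_conormal hψ' i)
  have hl i := IsSmoothingOperator.of_analyticAt (b := b) (hℓ i)
  have hm := isSmoothingOperator_tangentialGrad (n := n) hb
  have hQm := IsSmoothingOperator.mulVec hQ hm
  have hκ : IsSmoothingOperator (n := n) b fun w p => a - p 0 * partialDeriv 0 w p :=
    (IsSmoothingOperator.of_analyticAt analyticAt_const).sub
      (IsTameOperator.partialDeriv_zero hb).coord_zero_mul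
  have hlower := (((IsSmoothingOperator.of_analyticAt (analyticAt_graphLaplacian hψ')).add
    (hκ.analyticAt_mul hg)).add ((IsSmoothingOperator.dotProduct hP hQm).add
      (IsSmoothingOperator.dotProduct hm (IsSmoothingOperator.mulVec hQ hP)))).add
        (IsSmoothingOperator.dotProduct hl hP)
  have hsquare := ((IsTameOperator.partialDeriv_zero (n := n) hb).mul
    (IsTameOperator.partialDeriv_zero hb)).coord_zero_mul.analyticAt_mul
      (hsymbol.div_const (c := a))
  have hlap := IsSmoothingOperator.sum Finset.univ fun i : Fin n =>
    IsSmoothingOperator.coord_zero_mul_partialDeriv_partialDeriv hb i.succ_ne_zero i.succ_ne_zero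
  have hmixed := IsSmoothingOperator.sum Finset.univ fun i : Fin n =>
    (IsSmoothingOperator.coord_zero_mul_partialDeriv_partialDeriv_zero hb
      i.succ_ne_zero).analyticAt_mul
        ((analyticAt_const (v := (2 : ℝ))).mul (analyticAt_graphGrad hψ' i))
  have htangential := ((((IsSmoothingOperator.dotProduct hm hQm).add
    (IsSmoothingOperator.dotProduct hl hm)).add
      (IsSmoothingOperator.of_analyticAt hc))).analyticAt_mul hs
  exact ((((((hκ.mul hlower).add hsquare).add hlap).sub hmixed).add htangential)).analyticAt_mul
    (hsymbol.inv hA)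

lemma dotProduct_mulVec_smul_add {m R : Type*} [Fintype m] [CommRing R] (Q : Matrix m m R)
    (v w : m → R) (r : R) :
    (r • v + w) ⬝ᵥ Q *ᵥ (r • v + w) =
      r ^ 2 * (v ⬝ᵥ Q *ᵥ v) + r * (v ⬝ᵥ Q *ᵥ w + w ⬝ᵥ Q *ᵥ v) + w ⬝ᵥ Q *ᵥ w := by
  simp only [Matrix.mulVec_add, Matrix.mulVec_smul, dotProduct_add, add_dotProduct,
    dotProduct_smul, smul_dotProduct, smul_eq_mul]
  ring

/-- The singular terms `a / s²` cancel, and multiplying what is left by `s / A` gives the Fuchsian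
equation. -/
lemma wave_eq_iff_fuchs_eq {s a A : ℝ} (hs : s ≠ 0) (ha : a ≠ 0) (hA : A ≠ 0)
    (w₀ w₀₀ mixed lap L B D g M : ℝ) :
    A * (a / s ^ 2 + w₀₀) + 2 * mixed - lap + L * (-(a / s) + w₀) =
        (a / s - w₀) ^ 2 * (A / a + s * g) + (a / s - w₀) * B + (a / s - w₀) * D + M ↔
      s * w₀₀ + 2 * w₀ = A⁻¹ * ((a - s * w₀) * (L + g * (a - s * w₀) + B + D) +
        A / a * (s * (w₀ * w₀)) + s * lap - 2 * (s * mixed) + s * M) := by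
  rw [← sub_eq_zero, ← sub_eq_zero (a := s * w₀₀ + 2 * w₀)]
  refine Iff.trans (Eq.congr_left ?_) (mul_eq_zero_iff_left (div_ne_zero hA hs))
  field_simp
  ring

theorem wave_eq_withLog_iff_fuchsEq {t : ℝ} {x : Fin n → ℝ} {w : (Fin (n + 1) → ℝ) → ℝ}
    {u : ℝ → (Fin n → ℝ) → ℝ} (hu : u = fun t x => withLog a w (straighten x₀ ψ (t, x)))
    {p : Fin (n + 1) → ℝ} (hp : p = straighten x₀ ψ (t, x)) (hp₀ : 0 < p 0) (ha : a ≠ 0)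
    (hψ : AnalyticAt ℝ ψ x) (hw : AnalyticAt ℝ w p) (hA : graphSymbol x₀ ψ p ≠ 0)
    (hg : conormal x₀ ψ p ⬝ᵥ Q p *ᵥ conormal x₀ ψ p = graphSymbol x₀ ψ p / a + p 0 * g p) :
    ptd (ptd u) t x - lapx u t x =
        Fin.cons (ptd u t x) (gradx u t x) ⬝ᵥ Q p *ᵥ Fin.cons (ptd u t x) (gradx u t x) +
          ℓ p ⬝ᵥ Fin.cons (ptd u t x) (gradx u t x) + c p ↔
      FuchsEq 2 (reducedOperator x₀ ψ a Q ℓ c g) w p := by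
  have hlog := analyticAt_withLog (a := a) hw hp₀
  have hgrad : (Fin.cons (ptd u t x) (gradx u t x) : Fin (n + 1) → ℝ) =
      (a / p 0 - partialDeriv 0 w p) • conormal x₀ ψ p + tangentialGrad w p := by
    rw [hu, cons_ptd_gradx_comp_straighten hψ.differentiableAt (hp ▸ hlog.differentiableAt), ← hp,
      partialDeriv_zero_withLog hw.differentiableAt hp₀, tangentialGrad_withLog, neg_add, neg_neg,
      ← sub_eq_add_neg]
  rw [hgrad, dotProduct_mulVec_smul_add, hg, dotProduct_add, dotProduct_smul, smul_eq_mul, hu,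
    ptd_ptd_sub_lapx_comp_straighten hψ hp hlog,
    partialDeriv_zero_partialDeriv_zero_withLog hw hp₀,
    partialDeriv_zero_withLog hw.differentiableAt hp₀]
  simp only [partialDeriv_succ_partialDeriv_zero_withLog hw hp₀, partialDeriv_succ_withLog]
  have hkey := wave_eq_iff_fuchs_eq hp₀.ne' ha hA (partialDeriv 0 w p)
    (partialDeriv 0 (partialDeriv 0 w) p)
    (∑ i, graphGrad x₀ ψ p i * partialDeriv i.succ (partialDeriv 0 w) p)
    (∑ i : Fin n, partialDeriv i.succ (partialDeriv i.succ w) p) (graphLaplacian x₀ ψ p)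
    (conormal x₀ ψ p ⬝ᵥ Q p *ᵥ tangentialGrad w p +
            tangentialGrad w p ⬝ᵥ Q p *ᵥ conormal x₀ ψ p) (ℓ p ⬝ᵥ conormal x₀ ψ p) (g p)
    (tangentialGrad w p ⬝ᵥ Q p *ᵥ tangentialGrad w p + ℓ p ⬝ᵥ tangentialGrad w p + c p)
  have hlap : ∑ i : Fin n, p 0 * partialDeriv i.succ (partialDeriv i.succ w) p =
      p 0 * ∑ i : Fin n, partialDeriv i.succ (partialDeriv i.succ w) p := by
    rw [Finset.mul_sum]
  have hmixed : ∑ i, 2 * graphGrad x₀ ψ p i * (p 0 * partialDeriv i.succ (partialDeriv 0 w) p) =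
      2 * (p 0 * ∑ i, graphGrad x₀ ψ p i * partialDeriv i.succ (partialDeriv 0 w) p) := by
    simp only [Finset.mul_sum]
    exact Finset.sum_congr rfl fun i _ => by ring
  rw [FuchsEq, reducedOperator, hlap, hmixed, ← hkey]
  ring_nf

end Reduction

section SingularSolutions

open scoped Matrix

variable {n : ℕ} {U Ω Ω' : Set (ℝ × (Fin n → ℝ))}
  {f₂ f₁ f₀ : ℝ → (Fin n → ℝ) → ℝ → (Fin n → ℝ) → ℝ} {ψ v₀ : (Fin n → ℝ) → ℝ} {a : ℝ}
  {x x₀ : Fin n → ℝ} {u u' v v' : ℝ → (Fin n → ℝ) → ℝ}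

/-- The wave equation with quadratic nonlinearity `f₂ + f₁ + f₀` and the hypersurface `t = ψ x`
admit a logarithmic blow-up of amplitude `a`: the hypersurface is noncharacteristic, and on it the
most singular terms of the equation for `-a log (t - ψ x)` cancel. -/
structure LogBlowupData (U : Set (ℝ × (Fin n → ℝ)))
    (f₂ f₁ f₀ : ℝ → (Fin n → ℝ) → ℝ → (Fin n → ℝ) → ℝ) (ψ : (Fin n → ℝ) → ℝ) (a : ℝ) : Prop where
  isOpen : IsOpen U
  homogPoly₂ : HomogPoly 2 U f₂
  homogPoly₁ : HomogPoly 1 U f₁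
  homogPoly₀ : HomogPoly 0 U f₀
  analyticOnNhd : AnalyticOnNhd ℝ ψ {x | (ψ x, x) ∈ U}
  ne_zero : a ≠ 0
  noncharacteristic : ∀ x, (ψ x, x) ∈ U → 1 - ∑ i, gradp ψ x i ^ 2 ≠ 0 ∧
    1 - ∑ i, gradp ψ x i ^ 2 = a * f₂ (ψ x) x (-1) (gradp ψ x)

namespace LogBlowupData

lemma graphSymbol_zero_ne_zero (h : LogBlowupData U f₂ f₁ f₀ ψ a) (hx₀ : (ψ x₀, x₀) ∈ U) :
    graphSymbol x₀ ψ 0 ≠ 0 := by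
  rw [graphSymbol, graphGrad, straighten_symm_zero]
  exact (h.noncharacteristic x₀ hx₀).1

lemma analyticAt_straighten_symm_zero_snd (h : LogBlowupData U f₂ f₁ f₀ ψ a)
    (hx₀ : (ψ x₀, x₀) ∈ U) : AnalyticAt ℝ ψ ((straighten x₀ ψ).symm 0).2 := by
  rw [straighten_symm_zero]
  exact h.analyticOnNhd x₀ hx₀

lemma analyticAt_comp_straighten_symm (h : LogBlowupData U f₂ f₁ f₀ ψ a) (hx₀ : (ψ x₀, x₀) ∈ U)
    {c : ℝ × (Fin n → ℝ) → ℝ} (hc : AnalyticAt ℝ c (ψ x₀, x₀)) :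
    AnalyticAt ℝ (fun p => c ((straighten x₀ ψ).symm p)) 0 :=
  hc.comp_of_eq (analyticAt_straighten_symm (h.analyticAt_straighten_symm_zero_snd hx₀))
    straighten_symm_zero

lemma eventually_straighten_symm (h : LogBlowupData U f₂ f₁ f₀ ψ a) (hx₀ : (ψ x₀, x₀) ∈ U)
    {P : ℝ × (Fin n → ℝ) → Prop} (hP : ∀ᶠ q in nhds (ψ x₀, x₀), P q) :
    ∀ᶠ p in nhds 0, P ((straighten x₀ ψ).symm p) := by
  rw [← straighten_symm_zero] at hP
  exact (analyticAt_straighten_symm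
    (h.analyticAt_straighten_symm_zero_snd hx₀)).continuousAt.eventually hP

lemma eventually_straighten_symm_update_zero (h : LogBlowupData U f₂ f₁ f₀ ψ a)
    (hx₀ : (ψ x₀, x₀) ∈ U) {P : ℝ × (Fin n → ℝ) → Prop} (hP : ∀ᶠ q in nhds (ψ x₀, x₀), P q) :
    ∀ᶠ p in nhds 0, P (ψ ((straighten x₀ ψ).symm p).2, ((straighten x₀ ψ).symm p).2) := by
  have hslice : Tendsto (fun p : Fin (n + 1) → ℝ => Function.update p 0 0) (nhds 0) (nhds 0) :=
    (continuous_id.update 0 continuous_const).tendsto' 0 0 (by simp)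
  filter_upwards [hslice.eventually (h.eventually_straighten_symm hx₀ hP)] with p hp
  rwa [straighten_symm_update_zero] at hp

lemma exists_conormal_quadraticForm_eq (h : LogBlowupData U f₂ f₁ f₀ ψ a)
    {Q : ℝ × (Fin n → ℝ) → Matrix (Fin (n + 1)) (Fin (n + 1)) ℝ}
    (hQ : ∀ i j, AnalyticOnNhd ℝ (fun q => Q q i j) U)
    (hf₂ : ∀ t x τ ξ, f₂ t x τ ξ = Fin.cons τ ξ ⬝ᵥ Q (t, x) *ᵥ Fin.cons τ ξ)
    (hx₀ : (ψ x₀, x₀) ∈ U) : ∃ g, AnalyticAt ℝ g 0 ∧ ∀ᶠ p in nhds 0,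
      conormal x₀ ψ p ⬝ᵥ Q ((straighten x₀ ψ).symm p) *ᵥ conormal x₀ ψ p =
        graphSymbol x₀ ψ p / a + p 0 * g p := by
  have hψ := h.analyticAt_straighten_symm_zero_snd hx₀
  have hform : AnalyticAt ℝ (fun p =>
      conormal x₀ ψ p ⬝ᵥ Q ((straighten x₀ ψ).symm p) *ᵥ conormal x₀ ψ p) 0 := by
    simp only [dotProduct, Matrix.mulVec]
    exact Finset.analyticAt_fun_sum _ fun i _ => (analyticAt_conormal hψ i).fun_mul <|
      Finset.analyticAt_fun_sum _ fun j _ =>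
        (h.analyticAt_comp_straighten_symm hx₀ (hQ i j _ hx₀)).fun_mul (analyticAt_conormal hψ j)
  obtain ⟨g, hg, hform_eq⟩ := exists_eventuallyEq_coord_zero_mul
    (hform.fun_sub ((analyticAt_graphSymbol hψ).fun_div analyticAt_const h.ne_zero)) <| by
      filter_upwards [h.eventually_straighten_symm_update_zero hx₀
        (h.isOpen.eventually_mem hx₀)] with p hp
      rw [sub_eq_zero, eq_div_iff h.ne_zero, mul_comm, conormal, graphSymbol, graphGrad,
        straighten_symm_update_zero, ← hf₂]
      exact (h.noncharacteristic _ hp).2.symm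
  exact ⟨g, hg, hform_eq.mono fun p hp => eq_add_of_sub_eq' hp⟩

theorem exists_isSmoothingOperator (h : LogBlowupData U f₂ f₁ f₀ ψ a) (hx₀ : (ψ x₀, x₀) ∈ U) :
    ∃ E, IsSmoothingOperator 2 E ∧ ∀ w, AnalyticAt ℝ w 0 → ∀ᶠ p in nhds 0, 0 < p 0 →
      (SolvesWave f₂ f₁ f₀ (fun t x => -a * Real.log (t - ψ x) + w (straighten x₀ ψ (t, x)))
        {(straighten x₀ ψ).symm p} ↔ FuchsEq 2 E w p) := by
  obtain ⟨Q, hQ, hf₂⟩ := h.homogPoly₂.exists_matrix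
  obtain ⟨ℓ, hℓ, hf₁⟩ := h.homogPoly₁.exists_vector
  obtain ⟨c, hc, hf₀⟩ := h.homogPoly₀.exists_function
  obtain ⟨g, hg, hform⟩ := h.exists_conormal_quadraticForm_eq hQ hf₂ hx₀
  have hA := h.graphSymbol_zero_ne_zero hx₀
  have hψ := h.analyticAt_straighten_symm_zero_snd hx₀
  refine ⟨reducedOperator x₀ ψ a (fun p => Q ((straighten x₀ ψ).symm p))
    (fun p => ℓ ((straighten x₀ ψ).symm p)) (fun p => c ((straighten x₀ ψ).symm p)) g,
    isSmoothingOperator_reducedOperator two_pos (h.analyticOnNhd x₀ hx₀) hA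
      (fun i j => h.analyticAt_comp_straighten_symm hx₀ (hQ i j _ hx₀))
      (fun i => h.analyticAt_comp_straighten_symm hx₀ (hℓ i _ hx₀))
      (h.analyticAt_comp_straighten_symm hx₀ (hc _ hx₀)) hg, fun w hw => ?_⟩
  filter_upwards [hform, hw.eventually_analyticAt,
    (analyticAt_graphSymbol hψ).continuousAt.eventually_ne hA,
    (analyticAt_straighten_symm_snd (ψ := ψ) 0).continuousAt.eventually hψ.eventually_analyticAt]
    with p hpform hpw hpA hpψ hp₀
  rw [← wave_eq_withLog_iff_fuchsEq rfl ((Equiv.apply_symm_apply _ p).symm) hp₀ h.ne_zero hpψ hpw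
    hpA hpform]
  simp only [SolvesWave, Set.mem_singleton_iff, hf₂, hf₁, hf₀]
  refine ⟨fun hu => hu _ _ rfl, fun hu t x htx => ?_⟩
  obtain ⟨rfl, rfl⟩ := Prod.ext_iff.1 htx
  exact hu

end LogBlowupData

lemma SolvesWave.congr {S : Set (ℝ × (Fin n → ℝ))} (hu : SolvesWave f₂ f₁ f₀ u S)
    (h : ∀ q ∈ S, ∀ᶠ y in nhds q, u y.1 y.2 = u' y.1 y.2) : SolvesWave f₂ f₁ f₀ u' S := by
  intro t x htx
  have hloc := h _ htx
  have hptd : ∀ᶠ y in nhds (t, x), ptd u y.1 y.2 = ptd u' y.1 y.2 :=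
    hloc.eventually_nhds.mono fun y hy => ptd_congr hy
  have hpxd i : ∀ᶠ y in nhds (t, x), pxd i u y.1 y.2 = pxd i u' y.1 y.2 :=
    hloc.eventually_nhds.mono fun y hy => pxd_congr hy i
  have hlapx : lapx u t x = lapx u' t x :=
    Finset.sum_congr rfl fun i _ => pxd_congr (hpxd i) i
  have hgradx : gradx u t x = gradx u' t x := funext fun i => pxd_congr hloc i
  have hwave := hu t x htx
  rwa [ptd_congr hptd, hlapx, hgradx, ptd_congr hloc] at hwave

/-- `v` is the regular part on `Ω` of a solution `-a log (t - ψ x) + v` of the wave equation that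
blows up on the hypersurface `t = ψ x`, and has trace `v₀` there. -/
structure IsRegularPart (f₂ f₁ f₀ : ℝ → (Fin n → ℝ) → ℝ → (Fin n → ℝ) → ℝ)
    (ψ : (Fin n → ℝ) → ℝ) (a : ℝ) (v₀ : (Fin n → ℝ) → ℝ) (Ω : Set (ℝ × (Fin n → ℝ)))
    (v : ℝ → (Fin n → ℝ) → ℝ) : Prop where
  analyticOnNhd : AnalyticOnNhd ℝ (fun q : ℝ × (Fin n → ℝ) => v q.1 q.2) Ω
  trace : ∀ x, (ψ x, x) ∈ Ω → v (ψ x) x = v₀ x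
  solvesWave : SolvesWave f₂ f₁ f₀ (fun t x => -a * Real.log (t - ψ x) + v t x)
    (Ω ∩ {p | ψ p.2 < p.1})

lemma IsRegularPart.iUnion {ι : Type*} {S : ι → Set (ℝ × (Fin n → ℝ))}
    {V : ι → ℝ → (Fin n → ℝ) → ℝ} (hS : ∀ i, IsOpen (S i))
    (hV : ∀ i, IsRegularPart f₂ f₁ f₀ ψ a v₀ (S i) (V i))
    (hv : ∀ i, ∀ q ∈ S i, v q.1 q.2 = V i q.1 q.2) :
    IsRegularPart f₂ f₁ f₀ ψ a v₀ (⋃ i, S i) v := by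
  have hloc {i q} (hq : q ∈ S i) : ∀ᶠ y in nhds q, V i y.1 y.2 = v y.1 y.2 := by
    filter_upwards [(hS i).mem_nhds hq] with y hy using (hv i y hy).symm
  refine ⟨fun q hq => ?_, fun x hx => ?_, fun t x htx => ?_⟩
  · obtain ⟨i, hi⟩ := Set.mem_iUnion.1 hq
    exact ((hV i).analyticOnNhd q hi).congr (hloc hi)
  · obtain ⟨i, hi⟩ := Set.mem_iUnion.1 hx
    exact (hv i _ hi).trans ((hV i).trace x hi)
  · obtain ⟨i, hi⟩ := Set.mem_iUnion.1 htx.1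
    refine (hV i).solvesWave.congr (fun q hq => ?_) t x ⟨hi, htx.2⟩
    filter_upwards [hloc hq.1] with y hy
    rw [hy]

lemma exists_eq_of_agree_on_inter {ι α β γ : Type*} [Nonempty γ] {S : ι → Set (α × β)}
    {V : ι → α → β → γ} (hV : ∀ i j, ∀ q ∈ S i ∩ S j, V i q.1 q.2 = V j q.1 q.2) :
    ∃ v : α → β → γ, ∀ i, ∀ q ∈ S i, v q.1 q.2 = V i q.1 q.2 := by
  classical
  refine ⟨fun t x => if h : ∃ i, (t, x) ∈ S i then V h.choose t x else Classical.arbitrary γ,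
    fun i q hq => ?_⟩
  have h : ∃ i, (q.1, q.2) ∈ S i := ⟨i, hq⟩
  exact (dif_pos h).trans <| hV _ _ q ⟨h.choose_spec, hq⟩

/-- Every point of `Ω` is joined to the graph `t = ψ x` by a vertical segment inside `Ω`, along
which an identity near the graph can be continued analytically. -/
def IsFiberStarShaped (ψ : (Fin n → ℝ) → ℝ) (Ω : Set (ℝ × (Fin n → ℝ))) : Prop :=
  ∀ t x, (t, x) ∈ Ω → ∀ s ∈ Set.uIcc (ψ x) t, (s, x) ∈ Ω

lemma isFiberStarShaped_preimage_straighten_ball (r : ℝ) :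
    IsFiberStarShaped ψ (straighten x₀ ψ ⁻¹' Metric.ball 0 r) := by
  intro t x htx s hs
  rw [Set.mem_preimage, mem_ball_zero_iff] at htx ⊢
  refine lt_of_le_of_lt ((pi_norm_le_iff_of_nonneg (norm_nonneg _)).2 fun i => ?_) htx
  refine Fin.cases ?_ (fun i => ?_) i
  · exact (Set.abs_sub_left_of_mem_uIcc hs).trans (norm_le_pi_norm (straighten x₀ ψ (t, x)) 0)
  · exact norm_le_pi_norm (straighten x₀ ψ (t, x)) i.succ

namespace LogBlowupData

theorem exists_isRegularPart_nhds (h : LogBlowupData U f₂ f₁ f₀ ψ a) (hx₀ : (ψ x₀, x₀) ∈ U)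
    (hv₀ : AnalyticAt ℝ v₀ x₀) :
    ∃ Ω, IsOpen Ω ∧ (ψ x₀, x₀) ∈ Ω ∧ Ω ⊆ U ∧ IsFiberStarShaped ψ Ω ∧
      ∃ v, IsRegularPart f₂ f₁ f₀ ψ a v₀ Ω v := by
  obtain ⟨E, hE, hwave⟩ := h.exists_isSmoothingOperator hx₀
  obtain ⟨w, hw, htrace, hfuchs⟩ := exists_fuchsEq two_pos hE
    (h.analyticAt_comp_straighten_symm hx₀ (hv₀.comp_of_eq analyticAt_snd rfl))
  have hψ : ∀ᶠ q : ℝ × (Fin n → ℝ) in nhds (ψ x₀, x₀), AnalyticAt ℝ ψ q.2 :=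
    continuousAt_snd.eventually (h.analyticOnNhd x₀ hx₀).eventually_analyticAt
  obtain ⟨r, hr, hball⟩ := Metric.eventually_nhds_iff_ball.1 <|
    (h.eventually_straighten_symm hx₀ ((h.isOpen.eventually_mem hx₀).and hψ)).and <|
      hw.eventually_analyticAt.and <| htrace.and <| hfuchs.and (hwave w hw)
  have hbox q (hq : q ∈ straighten x₀ ψ ⁻¹' Metric.ball 0 r) := hball _ hq
  simp only [Equiv.symm_apply_apply] at hbox
  refine ⟨straighten x₀ ψ ⁻¹' Metric.ball 0 r, isOpen_iff_mem_nhds.2 fun q hq => ?_, ?_,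
    fun q hq => (hbox q hq).1.1, isFiberStarShaped_preimage_straighten_ball r,
    fun t x => w (straighten x₀ ψ (t, x)), fun q hq => ?_, fun x hx => ?_, fun t x htx => ?_⟩
  · exact (analyticAt_straighten (hbox q hq).1.2).continuousAt.preimage_mem_nhds
      (Metric.isOpen_ball.mem_nhds hq)
  · rw [Set.mem_preimage, straighten_graph_self]
    exact Metric.mem_ball_self hr
  · exact (hbox q hq).2.1.comp (analyticAt_straighten (hbox q hq).1.2)
  · have hgraph : Function.update (straighten x₀ ψ (ψ x, x)) 0 0 = straighten x₀ ψ (ψ x, x) := by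
      rw [Function.update_eq_self_iff, straighten_apply_zero, sub_self]
    have htrace_x := (hbox _ hx).2.2.1
    rwa [hgraph, Equiv.symm_apply_apply] at htrace_x
  · obtain ⟨-, -, -, hfuchs_tx, hwave_tx⟩ := hbox _ htx.1
    exact (hwave_tx (sub_pos.2 htx.2)).2 hfuchs_tx t x rfl

theorem eventuallyEq_of_isRegularPart (h : LogBlowupData U f₂ f₁ f₀ ψ a) (hx : (ψ x, x) ∈ U)
    (hΩ : IsOpen Ω) (hΩ' : IsOpen Ω') (hxΩ : (ψ x, x) ∈ Ω) (hxΩ' : (ψ x, x) ∈ Ω')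
    (hv : IsRegularPart f₂ f₁ f₀ ψ a v₀ Ω v) (hv' : IsRegularPart f₂ f₁ f₀ ψ a v₀ Ω' v') :
    ∀ᶠ q in nhds (ψ x, x), v q.1 q.2 = v' q.1 q.2 := by
  obtain ⟨E, hE, hwave⟩ := h.exists_isSmoothingOperator hx
  have hanalytic {O V} (hxO : (ψ x, x) ∈ O) (hV : IsRegularPart f₂ f₁ f₀ ψ a v₀ O V) :=
    h.analyticAt_comp_straighten_symm hx (hV.analyticOnNhd _ hxO)
  have hfuchs {O V} (hO : IsOpen O) (hxO : (ψ x, x) ∈ O)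
      (hV : IsRegularPart f₂ f₁ f₀ ψ a v₀ O V) : ∀ᶠ p in nhds 0, 0 < p 0 →
        FuchsEq 2 E (fun p => V ((straighten x ψ).symm p).1 ((straighten x ψ).symm p).2) p := by
    have hiff := hwave _ (hanalytic hxO hV)
    simp only [Equiv.symm_apply_apply] at hiff
    filter_upwards [hiff, h.eventually_straighten_symm hx (hO.eventually_mem hxO)] with p hp hpO hp₀
    refine (hp hp₀).1 fun t x' htx => hV.solvesWave t x' ?_
    rw [Set.mem_singleton_iff] at htx
    rw [htx]
    exact ⟨hpO, (lt_straighten_symm_fst_iff p).2 hp₀⟩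
  have htrace : ∀ᶠ p in nhds 0,
      v (ψ ((straighten x ψ).symm p).2) ((straighten x ψ).symm p).2 =
        v' (ψ ((straighten x ψ).symm p).2) ((straighten x ψ).symm p).2 := by
    filter_upwards [h.eventually_straighten_symm_update_zero hx
      ((hΩ.eventually_mem hxΩ).and (hΩ'.eventually_mem hxΩ'))] with p hp
    rw [hv.trace _ hp.1, hv'.trace _ hp.2]
  have heq := eventuallyEq_of_fuchsEq two_pos hE (hanalytic hxΩ hv) (hanalytic hxΩ' hv')
    (by simpa only [straighten_symm_update_zero] using htrace)
    (hfuchs hΩ hxΩ hv) (hfuchs hΩ' hxΩ' hv')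
  have hstraighten : ContinuousAt (straighten x ψ) (ψ x, x) :=
    (analyticAt_straighten (h.analyticOnNhd x hx)).continuousAt
  rw [ContinuousAt, straighten_graph_self] at hstraighten
  filter_upwards [hstraighten.eventually heq] with q hq
  simpa only [Equiv.symm_apply_apply] using hq

theorem eqOn_of_isFiberStarShaped (h : LogBlowupData U f₂ f₁ f₀ ψ a)
    (hΩ : IsOpen Ω) (hΩ' : IsOpen Ω') (hΩU : Ω ⊆ U)
    (hstar : IsFiberStarShaped ψ Ω) (hstar' : IsFiberStarShaped ψ Ω')
    (hv : IsRegularPart f₂ f₁ f₀ ψ a v₀ Ω v) (hv' : IsRegularPart f₂ f₁ f₀ ψ a v₀ Ω' v') :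
    ∀ q ∈ Ω ∩ Ω', v q.1 q.2 = v' q.1 q.2 := by
  rintro ⟨t, x⟩ ⟨htx, htx'⟩
  have hx := hstar t x htx (ψ x) Set.left_mem_uIcc
  have hnear := h.eventuallyEq_of_isRegularPart (hΩU hx) hΩ hΩ' hx
    (hstar' t x htx' (ψ x) Set.left_mem_uIcc) hv hv'
  have hsegment {O V} (hO : IsFiberStarShaped ψ O) (htxO : (t, x) ∈ O)
      (hV : IsRegularPart f₂ f₁ f₀ ψ a v₀ O V) :
      AnalyticOnNhd ℝ (fun s => V s x) (Set.uIcc (ψ x) t) := fun s hs =>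
    (hV.analyticOnNhd _ (hO t x htxO s hs)).comp_of_eq (analyticAt_id.prod analyticAt_const) rfl
  exact (hsegment hstar htx hv).eqOn_of_preconnected_of_eventuallyEq (hsegment hstar' htx' hv')
    isPreconnected_uIcc Set.left_mem_uIcc
    ((Continuous.prodMk_left x).continuousAt.eventually hnear) Set.right_mem_uIcc

theorem exists_isRegularPart (h : LogBlowupData U f₂ f₁ f₀ ψ a)
    (hv₀ : AnalyticOnNhd ℝ v₀ {x | (ψ x, x) ∈ U}) :
    ∃ Ω, IsOpen Ω ∧ {p ∈ U | p.1 = ψ p.2} ⊆ Ω ∧ Ω ⊆ U ∧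
      ∃ v, IsRegularPart f₂ f₁ f₀ ψ a v₀ Ω v := by
  choose S hS hmem hSU hstar V hV using fun z : {x | (ψ x, x) ∈ U} =>
    h.exists_isRegularPart_nhds z.2 (hv₀ z.1 z.2)
  obtain ⟨v, hv⟩ := exists_eq_of_agree_on_inter fun z z' =>
    h.eqOn_of_isFiberStarShaped (hS z) (hS z') (hSU z) (hstar z) (hstar z') (hV z) (hV z')
  refine ⟨⋃ z, S z, isOpen_iUnion hS, ?_, Set.iUnion_subset hSU, v, .iUnion hS hV hv⟩
  rintro ⟨t, x⟩ ⟨hxU, htx⟩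
  obtain rfl : t = ψ x := htx
  exact Set.mem_iUnion_of_mem ⟨x, hxU⟩ (hmem ⟨x, hxU⟩)

end LogBlowupData

end SingularSolutions

/-- Singular solutions of nonlinear wave equations with quadratic nonlinearity,
blowing up logarithmically along the prescribed noncharacteristic hypersurface
`Σ = {t = ψ(x)}`, with prescribed trace `v₀` on `Σ` and local uniqueness. -/
theorem stmt0 {n : ℕ} (U : Set (ℝ × (Fin n → ℝ))) (hU : IsOpen U)
    (f₂ f₁ f₀ : ℝ → (Fin n → ℝ) → ℝ → (Fin n → ℝ) → ℝ)
    (hf₂ : HomogPoly 2 U f₂) (hf₁ : HomogPoly 1 U f₁) (hf₀ : HomogPoly 0 U f₀)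
    (ψ : (Fin n → ℝ) → ℝ) (hψ : AnalyticOnNhd ℝ ψ {x | (ψ x, x) ∈ U})
    (a : ℝ) (ha : a ≠ 0)
    (hcond : ∀ x, (ψ x, x) ∈ U →
      1 - ∑ i, gradp ψ x i ^ 2 ≠ 0 ∧
      1 - ∑ i, gradp ψ x i ^ 2 = a * f₂ (ψ x) x (-1) (gradp ψ x))
    (v₀ : (Fin n → ℝ) → ℝ) (hv₀ : AnalyticOnNhd ℝ v₀ {x | (ψ x, x) ∈ U}) :
    ∃ Ω : Set (ℝ × (Fin n → ℝ)), IsOpen Ω ∧ {p ∈ U | p.1 = ψ p.2} ⊆ Ω ∧ Ω ⊆ U ∧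
      ∃ v : ℝ → (Fin n → ℝ) → ℝ,
        AnalyticOnNhd ℝ (fun p : ℝ × (Fin n → ℝ) => v p.1 p.2) Ω ∧
        (∀ x, (ψ x, x) ∈ Ω → v (ψ x) x = v₀ x) ∧
        SolvesWave f₂ f₁ f₀ (fun t x => -a * Real.log (t - ψ x) + v t x)
          (Ω ∩ {p | ψ p.2 < p.1}) ∧
        ∀ (Ω' : Set (ℝ × (Fin n → ℝ))) (v' : ℝ → (Fin n → ℝ) → ℝ),
          IsOpen Ω' → {p ∈ U | p.1 = ψ p.2} ⊆ Ω' →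
          AnalyticOnNhd ℝ (fun p : ℝ × (Fin n → ℝ) => v' p.1 p.2) Ω' →
          (∀ x, (ψ x, x) ∈ Ω' → v' (ψ x) x = v₀ x) →
          SolvesWave f₂ f₁ f₀ (fun t x => -a * Real.log (t - ψ x) + v' t x)
            (Ω' ∩ {p | ψ p.2 < p.1}) →
          ∃ Ω'' : Set (ℝ × (Fin n → ℝ)), IsOpen Ω'' ∧ {p ∈ U | p.1 = ψ p.2} ⊆ Ω'' ∧
            ∀ p ∈ Ω'', v p.1 p.2 = v' p.1 p.2 := by
  have h : LogBlowupData U f₂ f₁ f₀ ψ a := ⟨hU, hf₂, hf₁, hf₀, hψ, ha, hcond⟩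
  obtain ⟨Ω, hΩ, hgraph, hΩU, v, hv⟩ := h.exists_isRegularPart hv₀
  refine ⟨Ω, hΩ, hgraph, hΩU, v, hv.analyticOnNhd, hv.trace, hv.solvesWave,
    fun Ω' v' hΩ' hgraph' hanalytic htrace hwave =>
      ⟨{q | ∀ᶠ y in nhds q, v y.1 y.2 = v' y.1 y.2}, isOpen_setOfPred_eventually_nhds, ?_,
        fun q hq => hq.self_of_nhds⟩⟩
  rintro ⟨t, x⟩ ⟨hxU, htx⟩
  obtain rfl : t = ψ x := htx
  exact h.eventuallyEq_of_isRegularPart hxU hΩ hΩ' (hgraph ⟨hxU, rfl⟩) (hgraph' ⟨hxU, rfl⟩) hv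
    ⟨hanalytic, htrace, hwave⟩
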